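/- arXiv:1807.06549 — 2 statements merged into one kernel-verified Lean document; each statement's English description precedes it below -/
import Mathlib

section
/- Let σ > 0 and μ ≥ 0 be constants. Then for every bounded d ∈ C²([0,∞);ℝ) and every classical solution u of the damped wave system with boundary input d, it holds that limsup_{t→+∞} ( (∫₀¹ u(t,x)² dx)^{1/2} ) ≤ G(μ,σ) · sup_{t≥0} |d(t)|, where G(μ,σ) is defined in the context. -/
/-!
The proof decomposes the solution into sine modes. With `k = nπ`, the coefficient
`y(t) = ∫₀¹ u(t,x) sin(kx) dx` satisfies `y'' + (μ + k²σ) y' + k² y = k (d + σ d')` (`mode_ode`), so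
variation of constants bounds `|y|` by decaying transients plus `sup |d|` times the `L¹` norm of the
impulse response `h = k (e + σ e')`, where `e` is the fundamental solution of the oscillator
(`IsKernel.solution_bound`).

The coefficient `A_n` is `k ‖h‖₁`. If `h ≥ 0`, this is `1`, the normalised static gain. Otherwise let
`s` be the first zero of `h`. The identity `e'² + a e e' + k² e² = exp(-a t)`, with `a = μ + k²σ`,
shows that the normalised step response at `s` is at most `1 + √(1 - μσ) exp(-a s / 2)`
(`IsKernel.step_le`). For real poles `h` changes sign only once, which gives
`1 + 2 √(1 - μσ) exp(-a s / 2)`; for complex poles `h` reproduces itself with a factor `-q` after a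
half period, which divides the last term by `1 - q`. The explicit kernels in the three damping regimes
serve to locate `s` (`exists_kernel`).

Finally Parseval's identity for the sine basis (`hasSum_sine`) turns the bounds on the modes into a
bound on the `L²` norm. The limit `t → ∞` is exchanged with the sum over the modes by Tannery's
theorem (`limsup_le_of_modes`): the transients are dominated by a square-summable sequence because
`|e'| ≤ 1` and `|e' + a e| ≤ 1` force `|e| ≤ 2 / a`, and the coefficients `A_n` are eventually at
most `3`.
-/

open Real Filter MeasureTheory intervalIntegral Set

noncomputable section

/-- Time derivative ∂u/∂t. -/
def u_t (u : ℝ → ℝ → ℝ) (t x : ℝ) : ℝ := deriv (fun τ => u τ x) t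

/-- Second time derivative ∂²u/∂t². -/
def u_tt (u : ℝ → ℝ → ℝ) (t x : ℝ) : ℝ := deriv (deriv (fun τ => u τ x)) t

/-- Second space derivative ∂²u/∂x². -/
def u_xx (u : ℝ → ℝ → ℝ) (t x : ℝ) : ℝ := deriv (deriv (fun y => u t y)) x

/-- Mixed derivative ∂³u/∂t∂x². -/
def u_txx (u : ℝ → ℝ → ℝ) (t x : ℝ) : ℝ := deriv (deriv (fun y => u_t u t y)) x

/-- A classical solution of the wave equation with Kelvin-Voigt and viscous damping
with boundary input `d`: `u` is of class `C²`, `x ↦ ∂u/∂t(t,x)` is of class `C²` for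
each `t ≥ 0`, the PDE holds for `t ≥ 0`, `x ∈ [0,1]`, and `u(t,0) = d(t)`, `u(t,1) = 0`. -/
def IsClassicalSolution (σ μ : ℝ) (d : ℝ → ℝ) (u : ℝ → ℝ → ℝ) : Prop :=
  ContDiff ℝ 2 (Function.uncurry u) ∧
  (∀ t : ℝ, 0 ≤ t → ContDiff ℝ 2 (fun x => u_t u t x)) ∧
  (∀ t x : ℝ, 0 ≤ t → x ∈ Set.Icc (0:ℝ) 1 →
    u_tt u t x = u_xx u t x + σ * u_txx u t x - μ * u_t u t x) ∧
  (∀ t : ℝ, 0 ≤ t → u t 0 = d t ∧ u t 1 = 0)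

/-- A bounded disturbance of class `C²`. -/
def BddC2 (d : ℝ → ℝ) : Prop :=
  ContDiff ℝ 2 d ∧ ∃ M : ℝ, ∀ t : ℝ, 0 ≤ t → |d t| ≤ M

/-- `sup_{t ≥ 0} |d(t)|`. -/
def supD (d : ℝ → ℝ) : ℝ := sSup {y : ℝ | ∃ t : ℝ, 0 ≤ t ∧ y = |d t|}

/-- `max_{x ∈ [0,1]} |u(t,x)|`, the spatial sup norm of the displacement. -/
def supNorm (u : ℝ → ℝ → ℝ) (t : ℝ) : ℝ :=
  sSup {y : ℝ | ∃ x ∈ Set.Icc (0:ℝ) 1, y = |u t x|}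

/-- `(∫₀¹ u(t,x)² dx)^{1/2}`, the spatial L² norm of the displacement. -/
def L2Norm (u : ℝ → ℝ → ℝ) (t : ℝ) : ℝ := Real.sqrt (∫ x in (0:ℝ)..1, (u t x) ^ 2)

/-- The coefficients `A_n` (for the case `0 ≤ μσ < 1`), defined by cases:
overdamped with `nπσ ≥ 1`, overdamped/critical with `nπσ < 1` (where `A_n = 1`),
critically damped with `nπσ = 1 + √(1−μσ)`, and underdamped. -/
def Acoef (σ μ : ℝ) (n : ℕ) : ℝ :=
  if 2 * (n:ℝ) * π < μ + (n:ℝ) ^ 2 * π ^ 2 * σ then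
    (if 1 ≤ (n:ℝ) * π * σ then
      (1 + 2 * Real.sqrt (1 - μ * σ) *
        ((2 * ((μ + (n:ℝ) ^ 2 * π ^ 2 * σ) /
              Real.sqrt ((μ + (n:ℝ) ^ 2 * π ^ 2 * σ) ^ 2 - 4 * (n:ℝ) ^ 2 * π ^ 2)) *
            Real.sqrt (1 - μ * σ)) /
          (σ * (μ + (n:ℝ) ^ 2 * π ^ 2 * σ) *
              (1 + (μ + (n:ℝ) ^ 2 * π ^ 2 * σ) /
                Real.sqrt ((μ + (n:ℝ) ^ 2 * π ^ 2 * σ) ^ 2 - 4 * (n:ℝ) ^ 2 * π ^ 2)) -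
            2 * ((μ + (n:ℝ) ^ 2 * π ^ 2 * σ) /
              Real.sqrt ((μ + (n:ℝ) ^ 2 * π ^ 2 * σ) ^ 2 - 4 * (n:ℝ) ^ 2 * π ^ 2)))) ^
          ((μ + (n:ℝ) ^ 2 * π ^ 2 * σ) /
            Real.sqrt ((μ + (n:ℝ) ^ 2 * π ^ 2 * σ) ^ 2 - 4 * (n:ℝ) ^ 2 * π ^ 2)))
    else 1)
  else if μ + (n:ℝ) ^ 2 * π ^ 2 * σ = 2 * (n:ℝ) * π then
    (if (n:ℝ) * π * σ = 1 + Real.sqrt (1 - μ * σ) then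
      1 + 2 * Real.sqrt (1 - μ * σ) * Real.exp (-1 - 1 / Real.sqrt (1 - μ * σ))
    else 1)
  else
    1 + 2 * Real.sqrt (1 - σ * μ) *
      Real.exp (((μ + (n:ℝ) ^ 2 * π ^ 2 * σ) /
          Real.sqrt (4 * (n:ℝ) ^ 2 * π ^ 2 - (μ + (n:ℝ) ^ 2 * π ^ 2 * σ) ^ 2)) *
        Real.arccos ((2 - σ * μ - (n:ℝ) ^ 2 * π ^ 2 * σ ^ 2) /
          (2 * Real.sqrt (1 - σ * μ)))) /
      (Real.exp ((μ + (n:ℝ) ^ 2 * π ^ 2 * σ) * π /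
          Real.sqrt (4 * (n:ℝ) ^ 2 * π ^ 2 - (μ + (n:ℝ) ^ 2 * π ^ 2 * σ) ^ 2)) - 1)

/-- The constant `G(μ,σ)`: `1/√3` if `μσ ≥ 1`, and
`(1/π)√(2 Σ_{n=1}^∞ n^{−2} A_n²)` if `0 ≤ μσ < 1`. -/
def Gconst (μ σ : ℝ) : ℝ :=
  if 1 ≤ μ * σ then 1 / Real.sqrt 3
  else (1 / π) * Real.sqrt (2 * ∑' n : ℕ, (Acoef σ μ (n + 1)) ^ 2 / ((n:ℝ) + 1) ^ 2)

/-! ### Impulse responses of damped oscillators -/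

/-- `e` is the impulse response of the oscillator `y'' + a y' + k² y = f` (so `e 0 = 0`, `e' 0 = 1`),
`v` is its derivative, and both decay at infinity. -/
structure IsKernel (a k : ℝ) (e v : ℝ → ℝ) : Prop where
  pos_zero : e 0 = 0
  vel_zero : v 0 = 1
  pos_deriv : ∀ t, HasDerivAt e (v t) t
  vel_deriv : ∀ t, HasDerivAt v (-a * v t - k ^ 2 * e t) t
  pos_lim : Tendsto e atTop (nhds 0)
  vel_lim : Tendsto v atTop (nhds 0)

namespace IsKernel

variable {a k σ μ : ℝ} {e v : ℝ → ℝ}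

lemma pos_cont (K : IsKernel a k e v) : Continuous e :=
  continuous_iff_continuousAt.2 fun t => (K.pos_deriv t).continuousAt

lemma vel_cont (K : IsKernel a k e v) : Continuous v :=
  continuous_iff_continuousAt.2 fun t => (K.vel_deriv t).continuousAt

/-- A function with nonpositive derivative does not exceed its initial value. -/
lemma _root_.le_initial_of_deriv_nonpos {f f' : ℝ → ℝ} (hf : ∀ t, HasDerivAt f (f' t) t)
    (hf' : ∀ t, f' t ≤ 0) {t : ℝ} (ht : 0 ≤ t) : f t ≤ f 0 := by
  refine antitone_of_deriv_nonpos (fun s => (hf s).differentiableAt) (fun s => ?_) ht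
  rw [(hf s).deriv]; exact hf' s

/-- The energy `v² + k² e²` is nonincreasing. -/
lemma vel_abs_le (K : IsKernel a k e v) (ha : 0 ≤ a) {t : ℝ} (ht : 0 ≤ t) : |v t| ≤ 1 := by
  have h := le_initial_of_deriv_nonpos (f := fun t => v t ^ 2 + k ^ 2 * e t ^ 2)
    (f' := fun t => -2 * a * v t ^ 2)
    (fun t => by
      refine (((K.vel_deriv t).pow 2).add (((K.pos_deriv t).pow 2).const_mul (k ^ 2))).congr_deriv ?_
      push_cast; ring)
    (fun t => by nlinarith [mul_nonneg ha (sq_nonneg (v t))]) ht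
  simp only [K.pos_zero, K.vel_zero] at h
  rw [abs_le_one_iff_mul_self_le_one]
  nlinarith [mul_nonneg (sq_nonneg k) (sq_nonneg (e t))]

lemma mom_deriv (K : IsKernel a k e v) (t : ℝ) :
    HasDerivAt (fun s => v s + a * e s) (-k ^ 2 * e t) t := by
  refine ((K.vel_deriv t).add ((K.pos_deriv t).const_mul a)).congr_deriv ?_
  ring

/-- The combination `v + a e`, which propagates the initial position, is again a solution of the
homogeneous equation, with its own nonincreasing energy. -/
lemma mom_abs_le (K : IsKernel a k e v) (ha : 0 ≤ a) {t : ℝ} (ht : 0 ≤ t) :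
    |v t + a * e t| ≤ 1 := by
  have h := le_initial_of_deriv_nonpos (f := fun t => (v t + a * e t) ^ 2 + k ^ 2 * e t ^ 2)
    (f' := fun t => -2 * a * k ^ 2 * e t ^ 2)
    (fun t => by
      refine (((K.mom_deriv t).pow 2).add (((K.pos_deriv t).pow 2).const_mul (k ^ 2))).congr_deriv ?_
      push_cast; ring)
    (fun t => by nlinarith [mul_nonneg ha (mul_nonneg (sq_nonneg k) (sq_nonneg (e t)))]) ht
  simp only [K.pos_zero, K.vel_zero] at h
  rw [abs_le_one_iff_mul_self_le_one]
  nlinarith [mul_nonneg (sq_nonneg k) (sq_nonneg (e t))]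

/-- A bound for `e` of order `1 / a`, hence of order `1 / k²` for the modes of the wave equation. The
energy alone only gives order `1 / k`, which is too weak for square-summability over the modes. -/
lemma pos_abs_le (K : IsKernel a k e v) (ha : 0 ≤ a) {t : ℝ} (ht : 0 ≤ t) :
    a * |e t| ≤ 2 := by
  have h1 := K.mom_abs_le ha ht
  have h2 := K.vel_abs_le ha ht
  rw [show a * |e t| = |a * e t| by rw [abs_mul, abs_of_nonneg ha]]
  rw [abs_le] at *
  constructor <;> linarith [h1.1, h1.2, h2.1, h2.2]

/-- This quadratic form decays exactly like `exp (-a t)`, whatever the damping regime; it evaluates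
the overshoot without knowing the kernel explicitly. -/
lemma quad_eq (K : IsKernel a k e v) (t : ℝ) :
    v t ^ 2 + a * e t * v t + k ^ 2 * e t ^ 2 = exp (-a * t) := by
  have h : ∀ t, HasDerivAt (fun t => (v t ^ 2 + a * e t * v t + k ^ 2 * e t ^ 2) * exp (a * t)) 0 t :=
    fun t => by
      have h1 : HasDerivAt (fun t => exp (a * t)) (exp (a * t) * a) t := by
        simpa using ((hasDerivAt_id t).const_mul a).exp
      refine (((((K.vel_deriv t).pow 2).add (((K.pos_deriv t).const_mul a).mul (K.vel_deriv t))).add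
        (((K.pos_deriv t).pow 2).const_mul (k ^ 2))).mul h1).congr_deriv ?_
      simp only [Pi.add_apply, Pi.mul_apply, Pi.pow_apply]
      push_cast; ring
  have h0 := is_const_of_deriv_eq_zero (fun t => (h t).differentiableAt) (fun t => (h t).deriv) t 0
  simp only [K.pos_zero, K.vel_zero] at h0
  rw [neg_mul, Real.exp_neg]
  refine eq_inv_of_mul_eq_one_left ?_
  simpa using h0

/-- Variation of constants. The derivative of `d` is removed by an integration by parts, which turns
the kernel into the impulse response `k (e + σ v)` of the map `d ↦ y`. -/
lemma representation (K : IsKernel a k e v) {y y' d d' : ℝ → ℝ} {S T : ℝ} (hST : S ≤ T)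
    (hd : ∀ t, HasDerivAt d (d' t) t)
    (hy : ∀ t, HasDerivAt y (y' t) t)
    (hy' : ∀ t, S ≤ t → HasDerivAt y' (k * (d t + σ * d' t) - a * y' t - k ^ 2 * y t) t) :
    y T = (v (T - S) + a * e (T - S)) * y S + e (T - S) * (y' S - k * σ * d S)
      + ∫ s in S..T, (k * (e (T - s) + σ * v (T - s))) * d s := by
  have hsub : ∀ s, HasDerivAt (fun s : ℝ => T - s) (-1) s := fun s => by
    simpa using (hasDerivAt_id s).const_sub T
  have hdc : Continuous d := continuous_iff_continuousAt.2 fun t => (hd t).continuousAt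
  have he := K.pos_cont
  have hv := K.vel_cont
  have key := integral_eq_sub_of_hasDerivAt (a := S) (b := T)
    (f := fun s => (v (T - s) + a * e (T - s)) * y s + e (T - s) * (y' s - k * σ * d s))
    (f' := fun s => (k * (e (T - s) + σ * v (T - s))) * d s)
    (fun s hs => by
      rw [uIcc_of_le hST] at hs
      have hm : HasDerivAt (fun s => v (T - s) + a * e (T - s)) (-k ^ 2 * e (T - s) * (-1)) s :=
        (K.mom_deriv (T - s)).comp s (hsub s)
      have he : HasDerivAt (fun s => e (T - s)) (v (T - s) * (-1)) s :=
        (K.pos_deriv (T - s)).comp s (hsub s)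
      refine ((hm.mul (hy s)).add (he.mul ((hy' s hs.1).sub ((hd s).const_mul (k * σ))))).congr_deriv ?_
      simp only [Pi.sub_apply]
      ring)
    (by apply Continuous.intervalIntegrable; fun_prop)
  rw [key]
  simp [K.pos_zero, K.vel_zero]

/-- A solution is bounded by decaying transients plus `sup |d|` times the `L¹` norm of the impulse
response. -/
lemma solution_bound (K : IsKernel a k e v) {y y' d d' : ℝ → ℝ} {S T D C : ℝ} (hST : S ≤ T)
    (hd : ∀ t, HasDerivAt d (d' t) t)
    (hy : ∀ t, HasDerivAt y (y' t) t)
    (hy' : ∀ t, S ≤ t → HasDerivAt y' (k * (d t + σ * d' t) - a * y' t - k ^ 2 * y t) t)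
    (hD : ∀ t, S ≤ t → |d t| ≤ D)
    (hC : ∀ T, 0 ≤ T → ∫ s in 0..T, |k * (e s + σ * v s)| ≤ C) :
    |y T| ≤ |v (T - S) + a * e (T - S)| * |y S| + |e (T - S)| * |y' S - k * σ * d S| + D * C := by
  have hdc : Continuous d := continuous_iff_continuousAt.2 fun t => (hd t).continuousAt
  have he := K.pos_cont
  have hv := K.vel_cont
  have hD0 : 0 ≤ D := (abs_nonneg _).trans (hD S le_rfl)
  have h1 : |∫ s in S..T, (k * (e (T - s) + σ * v (T - s))) * d s| ≤ D * C := by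
    calc |∫ s in S..T, (k * (e (T - s) + σ * v (T - s))) * d s|
        ≤ ∫ s in S..T, |(k * (e (T - s) + σ * v (T - s))) * d s| :=
          abs_integral_le_integral_abs hST
      _ ≤ ∫ s in S..T, D * |k * (e (T - s) + σ * v (T - s))| := by
          apply integral_mono_on hST
          · apply Continuous.intervalIntegrable; fun_prop
          · apply Continuous.intervalIntegrable; fun_prop
          · intro s hs
            rw [abs_mul, mul_comm]
            exact mul_le_mul_of_nonneg_right (hD s hs.1) (abs_nonneg _)
      _ = D * ∫ s in 0..(T - S), |k * (e s + σ * v s)| := by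
          rw [intervalIntegral.integral_const_mul,
            intervalIntegral.integral_comp_sub_left (fun s => |k * (e s + σ * v s)|), sub_self]
      _ ≤ D * C := mul_le_mul_of_nonneg_left (hC _ (by linarith)) hD0
  rw [K.representation hST hd hy hy']
  refine (abs_add_le _ _).trans (add_le_add ((abs_add_le _ _).trans ?_) h1)
  rw [abs_mul, abs_mul]

/-- The step response: the primitive of the impulse response `k (e + σ v)` that vanishes at `0`. -/
def step (a k σ : ℝ) (e v : ℝ → ℝ) (t : ℝ) : ℝ := (1 - (v t + a * e t)) / k + k * σ * e t

lemma step_deriv (K : IsKernel a k e v) (hk : 0 < k) (t : ℝ) :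
    HasDerivAt (step a k σ e v) (k * (e t + σ * v t)) t := by
  refine ((((K.mom_deriv t).const_sub 1).div_const k).add
    ((K.pos_deriv t).const_mul (k * σ))).congr_deriv ?_
  field_simp

lemma step_lim (K : IsKernel a k e v) :
    Tendsto (step a k σ e v) atTop (nhds (1 / k)) := by
  have := (((K.vel_lim.add (K.pos_lim.const_mul a)).const_sub 1).div_const k).add
    (K.pos_lim.const_mul (k * σ))
  unfold step
  simpa using this

lemma step_zero (K : IsKernel a k e v) : step a k σ e v 0 = 0 := by
  simp [step, K.pos_zero, K.vel_zero]

lemma integral_eq (K : IsKernel a k e v) (hk : 0 < k) (s t : ℝ) :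
    ∫ r in s..t, k * (e r + σ * v r) = step a k σ e v t - step a k σ e v s := by
  have he := K.pos_cont
  have hv := K.vel_cont
  refine integral_eq_sub_of_hasDerivAt (fun r _ => K.step_deriv hk r) ?_
  apply Continuous.intervalIntegrable; fun_prop

lemma integral_abs_of_nonneg (K : IsKernel a k e v) (hk : 0 < k) {s t : ℝ} (hst : s ≤ t)
    (h : ∀ r ∈ Icc s t, 0 ≤ e r + σ * v r) :
    ∫ r in s..t, |k * (e r + σ * v r)| = step a k σ e v t - step a k σ e v s := by
  rw [← K.integral_eq hk]
  refine integral_congr fun r hr => ?_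
  rw [uIcc_of_le hst] at hr
  exact abs_of_nonneg (mul_nonneg hk.le (h r hr))

lemma integral_abs_of_nonpos (K : IsKernel a k e v) (hk : 0 < k) {s t : ℝ} (hst : s ≤ t)
    (h : ∀ r ∈ Icc s t, e r + σ * v r ≤ 0) :
    ∫ r in s..t, |k * (e r + σ * v r)| = step a k σ e v s - step a k σ e v t := by
  rw [← neg_sub, ← K.integral_eq hk, ← intervalIntegral.integral_neg]
  refine integral_congr fun r hr => ?_
  rw [uIcc_of_le hst] at hr
  exact abs_of_nonpos (mul_nonpos_of_nonneg_of_nonpos hk.le (h r hr))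

lemma abs_integrable (K : IsKernel a k e v) (s t : ℝ) :
    IntervalIntegrable (fun r => |k * (e r + σ * v r)|) volume s t := by
  have he := K.pos_cont
  have hv := K.vel_cont
  apply Continuous.intervalIntegrable; fun_prop

lemma integral_abs_mono (K : IsKernel a k e v) {s t : ℝ} (hst : s ≤ t) :
    ∫ r in 0..s, |k * (e r + σ * v r)| ≤ ∫ r in 0..t, |k * (e r + σ * v r)| := by
  rw [← integral_add_adjacent_intervals (K.abs_integrable 0 s) (K.abs_integrable s t)]
  have : 0 ≤ ∫ r in s..t, |k * (e r + σ * v r)| :=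
    intervalIntegral.integral_nonneg hst fun _ _ => abs_nonneg _
  linarith

/-- A nonnegative impulse response has `L¹` norm equal to the static gain `1 / k`. -/
lemma l1_nonneg (K : IsKernel a k e v) (hk : 0 < k)
    (h : ∀ r, 0 ≤ r → 0 ≤ e r + σ * v r) {T : ℝ} (hT : 0 ≤ T) :
    ∫ r in 0..T, |k * (e r + σ * v r)| ≤ 1 / k := by
  rw [K.integral_abs_of_nonneg hk hT fun r hr => h r hr.1, K.step_zero, sub_zero]
  refine ge_of_tendsto (K.step_lim (σ := σ)) ?_
  filter_upwards [eventually_ge_atTop T] with t ht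
  have := K.integral_abs_of_nonneg hk ht fun r hr => h r (hT.trans hr.1)
  have h0 : 0 ≤ ∫ r in T..t, |k * (e r + σ * v r)| :=
    intervalIntegral.integral_nonneg ht fun _ _ => abs_nonneg _
  linarith

/-- Height of the step response at a zero of the impulse response. With `e = -σ v`, the quadratic
form of `quad_eq` becomes `(1 - μσ) v²`, which determines `v` up to sign. -/
lemma step_le (K : IsKernel a k e v) (hk : 0 < k) (ha : a = μ + k ^ 2 * σ)
    (hμσ : μ * σ < 1) {t : ℝ} (ht : e t + σ * v t = 0) :
    step a k σ e v t ≤ (1 + √(1 - μ * σ) * exp (-a * t / 2)) / k := by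
  have hQ := K.quad_eq t
  have he : e t = -σ * v t := by linarith
  have h1 : k ^ 2 * σ * e t - (v t + a * e t) = -(1 - μ * σ) * v t := by
    rw [he, ha]; ring
  have h2 : (1 - μ * σ) * v t ^ 2 = exp (-a * t) := by
    rw [← hQ, he, ha]; ring
  have hs : √(1 - μ * σ) * exp (-a * t / 2) = √((1 - μ * σ) * exp (-a * t)) := by
    rw [Real.sqrt_mul (by linarith), Real.exp_half]
  have h3 : -(1 - μ * σ) * v t ≤ √(1 - μ * σ) * exp (-a * t / 2) := by
    rw [hs]
    apply Real.le_sqrt_of_sq_le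
    rw [← h2]; apply le_of_eq; ring
  have h4 : step a k σ e v t = (1 + (k ^ 2 * σ * e t - (v t + a * e t))) / k := by
    unfold step; field_simp; ring
  rw [h4, h1]
  gcongr

/-- `L¹` bound for an impulse response that changes sign once, at `s`: the step response climbs to
its value at `s` and then falls back to `1 / k`. -/
lemma l1_one_change (K : IsKernel a k e v) (hk : 0 < k) (ha : a = μ + k ^ 2 * σ)
    (hμσ : μ * σ < 1) {s : ℝ} (hs : 0 ≤ s)
    (hpos : ∀ r ∈ Icc 0 s, 0 ≤ e r + σ * v r) (hneg : ∀ r, s ≤ r → e r + σ * v r ≤ 0)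
    (T : ℝ) :
    ∫ r in 0..T, |k * (e r + σ * v r)| ≤ (1 + 2 * √(1 - μ * σ) * exp (-a * s / 2)) / k := by
  have h0 : e s + σ * v s = 0 := le_antisymm (hneg s le_rfl) (hpos s ⟨hs, le_rfl⟩)
  refine (K.integral_abs_mono (le_max_left T s)).trans ?_
  have hT := le_max_right T s
  generalize max T s = R at *
  rw [← integral_add_adjacent_intervals (K.abs_integrable 0 s) (K.abs_integrable s R),
    K.integral_abs_of_nonneg hk hs hpos,
    K.integral_abs_of_nonpos hk hT fun r hr => hneg r hr.1, K.step_zero]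
  have h1 : 1 / k ≤ step a k σ e v R := by
    refine le_of_tendsto (K.step_lim (σ := σ)) ?_
    filter_upwards [eventually_ge_atTop R] with t ht
    have := K.integral_abs_of_nonpos hk ht fun r hr => hneg r (hT.trans hr.1)
    have h0 : 0 ≤ ∫ r in R..t, |k * (e r + σ * v r)| :=
      intervalIntegral.integral_nonneg ht fun _ _ => abs_nonneg _
    linarith
  have h2 := K.step_le hk ha hμσ h0
  have h3 : (1 + 2 * √(1 - μ * σ) * exp (-a * s / 2)) / k
    = 2 * ((1 + √(1 - μ * σ) * exp (-a * s / 2)) / k) - 1 / k := by ring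
  rw [h3]; linarith

/-- `L¹` bound for an impulse response that reproduces itself with factor `-q` after time `τ`.
If `Φ T` is the integral up to time `T`, then `Φ T ≤ Φ (T + τ) = Φ τ + q Φ T`. -/
lemma l1_periodic (K : IsKernel a k e v) (hk : 0 < k) (ha : a = μ + k ^ 2 * σ)
    (hμσ : μ * σ < 1) {s τ q : ℝ} (hs : 0 ≤ s) (hsτ : s ≤ τ) (hq0 : 0 ≤ q) (hq : q < 1)
    (hpos : ∀ r ∈ Icc 0 s, 0 ≤ e r + σ * v r) (hneg : ∀ r ∈ Icc s τ, e r + σ * v r ≤ 0)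
    (heτ : ∀ r, e (r + τ) = -q * e r) (hvτ : ∀ r, v (r + τ) = -q * v r)
    (T : ℝ) :
    ∫ r in 0..T, |k * (e r + σ * v r)| ≤
      (1 + 2 * √(1 - μ * σ) * exp (-a * s / 2) / (1 - q)) / k := by
  have h0 : e s + σ * v s = 0 := le_antisymm (hneg s ⟨le_rfl, hsτ⟩) (hpos s ⟨hs, le_rfl⟩)
  have hm := K.integral_abs_mono (σ := σ) (show T ≤ T + τ by linarith)
  have hshift : ∫ r in τ..(T + τ), |k * (e r + σ * v r)| = q * ∫ r in 0..T, |k * (e r + σ * v r)| := by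
    rw [← intervalIntegral.integral_const_mul]
    have := intervalIntegral.integral_comp_add_right (a := 0) (b := T)
      (fun r => |k * (e r + σ * v r)|) τ
    rw [zero_add] at this
    rw [← this]
    refine integral_congr fun r _ => ?_
    have h1 : k * (e (r + τ) + σ * v (r + τ)) = -(q * (k * (e r + σ * v r))) := by
      rw [heτ, hvτ]; ring
    rw [h1, abs_neg, abs_mul, abs_of_nonneg hq0]
  rw [← integral_add_adjacent_intervals (K.abs_integrable 0 τ) (K.abs_integrable τ (T + τ)),
    ← integral_add_adjacent_intervals (K.abs_integrable 0 s) (K.abs_integrable s τ), hshift,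
    K.integral_abs_of_nonneg hk hs hpos,
    K.integral_abs_of_nonpos hk hsτ hneg, K.step_zero] at hm
  have h2 := K.step_le hk ha hμσ h0
  have he := heτ 0
  have hv := hvτ 0
  rw [zero_add, K.pos_zero] at he
  rw [zero_add, K.vel_zero] at hv
  have h1 : step a k σ e v τ = (1 + q) / k := by
    rw [step, he, hv]; ring
  have hq' : 0 < 1 - q := by linarith
  have h3 : (1 + 2 * √(1 - μ * σ) * exp (-a * s / 2) / (1 - q)) / k
    = (2 * ((1 + √(1 - μ * σ) * exp (-a * s / 2)) / k) - (1 + q) / k) / (1 - q) := by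
    field_simp; ring
  rw [h3, le_div_iff₀ hq']
  linarith

end IsKernel

/-! ### Explicit kernels in the three damping regimes -/

lemma exp_lin_deriv (l t : ℝ) : HasDerivAt (fun t => exp (-l * t)) (-l * exp (-l * t)) t := by
  have := ((hasDerivAt_id t).const_mul (-l)).exp
  simpa [mul_comm] using this

lemma exp_lin_lim {l : ℝ} (hl : 0 < l) : Tendsto (fun t => exp (-l * t)) atTop (nhds 0) := by
  refine Real.tendsto_exp_atBot.comp ?_
  exact tendsto_id.const_mul_atTop_of_neg (by linarith)

lemma isKernel_overdamped {a k l m : ℝ} (hl : 0 < l) (hlm : l < m) (ha : a = l + m)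
    (hk : k ^ 2 = l * m) :
    IsKernel a k (fun t => (exp (-l * t) - exp (-m * t)) / (m - l))
      (fun t => (m * exp (-m * t) - l * exp (-l * t)) / (m - l)) where
  pos_zero := by simp
  vel_zero := by
    have : m - l ≠ 0 := (sub_pos.2 hlm).ne'
    simp [this]
  pos_deriv t := by
    refine (((exp_lin_deriv l t).sub (exp_lin_deriv m t)).div_const (m - l)).congr_deriv ?_
    ring
  vel_deriv t := by
    refine ((((exp_lin_deriv m t).const_mul m).sub ((exp_lin_deriv l t).const_mul l)).div_const
      (m - l)).congr_deriv ?_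
    rw [ha, hk]; ring
  pos_lim := by
    simpa using ((exp_lin_lim hl).sub (exp_lin_lim (hl.trans hlm))).div_const (m - l)
  vel_lim := by
    simpa using (((exp_lin_lim (hl.trans hlm)).const_mul m).sub
      ((exp_lin_lim hl).const_mul l)).div_const (m - l)

lemma mul_exp_lin_lim {l : ℝ} (hl : 0 < l) :
    Tendsto (fun t => t * exp (-l * t)) atTop (nhds 0) := by
  simpa using tendsto_rpow_mul_exp_neg_mul_atTop_nhds_zero 1 l hl

lemma isKernel_critical {a k : ℝ} (hk : 0 < k) (ha : a = 2 * k) :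
    IsKernel a k (fun t => t * exp (-k * t)) (fun t => (1 - k * t) * exp (-k * t)) where
  pos_zero := by simp
  vel_zero := by simp
  pos_deriv t := by
    refine ((hasDerivAt_id t).mul (exp_lin_deriv k t)).congr_deriv ?_
    simp only [id]; ring
  vel_deriv t := by
    refine ((((hasDerivAt_id t).const_mul k).const_sub 1).mul (exp_lin_deriv k t)).congr_deriv ?_
    simp only [id]; rw [ha]; ring
  pos_lim := by
    exact mul_exp_lin_lim hk
  vel_lim := by
    have := (exp_lin_lim hk).sub ((mul_exp_lin_lim hk).const_mul k)
    simp only [mul_zero, sub_zero] at this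
    exact this.congr fun t => by ring

lemma isKernel_underdamped {a k w : ℝ} (ha : 0 < a) (hw : 0 < w) (hk : k ^ 2 = (a / 2) ^ 2 + w ^ 2) :
    IsKernel a k (fun t => exp (-(a / 2) * t) * sin (w * t) / w)
      (fun t => exp (-(a / 2) * t) * (cos (w * t) - a / (2 * w) * sin (w * t))) where
  pos_zero := by simp
  vel_zero := by simp
  pos_deriv t := by
    have h1 : HasDerivAt (fun t => w * t) w t := by simpa using (hasDerivAt_id t).const_mul w
    refine (((exp_lin_deriv (a / 2) t).mul h1.sin).div_const w).congr_deriv ?_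
    field_simp; ring
  vel_deriv t := by
    have h1 : HasDerivAt (fun t => w * t) w t := by simpa using (hasDerivAt_id t).const_mul w
    refine ((exp_lin_deriv (a / 2) t).mul (h1.cos.sub (h1.sin.const_mul (a / (2 * w))))).congr_deriv ?_
    simp only [Pi.sub_apply]
    rw [hk]
    field_simp; ring
  pos_lim := by
    have := (exp_lin_lim (half_pos ha)).zero_mul_isBoundedUnder_le (g := fun t => sin (w * t))
      (isBoundedUnder_of ⟨1, fun t => by simpa using abs_sin_le_one (w * t)⟩)
    simpa using this.div_const w
  vel_lim := by
    refine (exp_lin_lim (half_pos ha)).zero_mul_isBoundedUnder_le 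
      (isBoundedUnder_of ⟨1 + |a / (2 * w)|, fun t => ?_⟩)
    simp only [Function.comp, Real.norm_eq_abs]
    refine (abs_sub _ _).trans (add_le_add (abs_cos_le_one _) ?_)
    rw [abs_mul]
    exact mul_le_of_le_one_right (abs_nonneg _) (abs_sin_le_one _)

/-! ### The coefficients `A_n` as `L¹` norms -/

/-- The defining formula of `Acoef σ μ n`, rewritten in terms of `k = nπ` and `a = μ + k²σ`. -/
lemma Acoef_eq (σ μ : ℝ) (n : ℕ) {k a : ℝ} (hk : k = n * π) (ha : a = μ + k ^ 2 * σ) :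
    Acoef σ μ n =
      if 2 * k < a then
        (if 1 ≤ k * σ then
          1 + 2 * √(1 - μ * σ) *
            ((2 * (a / √(a ^ 2 - 4 * k ^ 2)) * √(1 - μ * σ)) /
              (σ * a * (1 + a / √(a ^ 2 - 4 * k ^ 2)) - 2 * (a / √(a ^ 2 - 4 * k ^ 2)))) ^
              (a / √(a ^ 2 - 4 * k ^ 2))
        else 1)
      else if a = 2 * k then
        (if k * σ = 1 + √(1 - μ * σ) then
          1 + 2 * √(1 - μ * σ) * exp (-1 - 1 / √(1 - μ * σ))
        else 1)
      else
        1 + 2 * √(1 - σ * μ) *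
          exp (a / √(4 * k ^ 2 - a ^ 2) *
            arccos ((2 - σ * μ - k ^ 2 * σ ^ 2) / (2 * √(1 - σ * μ)))) /
          (exp (a * π / √(4 * k ^ 2 - a ^ 2)) - 1) := by
  have e1 : (n : ℝ) ^ 2 * π ^ 2 = k ^ 2 := by rw [hk, mul_pow]
  have e2 : 2 * (n : ℝ) * π = 2 * k := by rw [hk, mul_assoc]
  have e3 : 4 * (n : ℝ) ^ 2 * π ^ 2 = 4 * k ^ 2 := by rw [hk, mul_pow, mul_assoc]
  unfold Acoef
  rw [e1, e2, e3, ← hk, ← ha]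

lemma overdamped_nonneg {l m σ t : ℝ} (hlm : l < m) (hσ : 0 < σ) (hσl : σ * l ≤ 1) (ht : 0 ≤ t) :
    0 ≤ (exp (-l * t) - exp (-m * t)) / (m - l) +
      σ * ((m * exp (-m * t) - l * exp (-l * t)) / (m - l)) := by
  have h0 : 0 < m - l := sub_pos.2 hlm
  have hE : exp (-m * t) ≤ exp (-l * t) := exp_le_exp.2 (by nlinarith)
  have hE0 : 0 < exp (-m * t) := exp_pos _
  have h2 : 0 ≤ (1 - σ * l) * (exp (-l * t) - exp (-m * t)) + σ * (m - l) * exp (-m * t) :=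
    add_nonneg (mul_nonneg (by linarith) (by linarith)) (by positivity)
  have h1 : (exp (-l * t) - exp (-m * t)) / (m - l) +
      σ * ((m * exp (-m * t) - l * exp (-l * t)) / (m - l)) =
      ((1 - σ * l) * (exp (-l * t) - exp (-m * t)) + σ * (m - l) * exp (-m * t)) / (m - l) := by
    ring
  rw [h1]; positivity

/-- The zero of the impulse response for two real poles `-l`, `-m` (with `1 / σ < l < m`). -/
def overdampedZero (σ l m : ℝ) : ℝ := log ((σ * m - 1) / (σ * l - 1)) / (m - l)

/-- The impulse response (up to the factor `k`), written so that its sign change at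
`overdampedZero` is visible. -/
lemma overdamped_factor {l m σ : ℝ} (hlm : l < m) (hσ : 0 < σ) (hσl : 1 < σ * l) (t : ℝ) :
    (exp (-l * t) - exp (-m * t)) / (m - l) +
      σ * ((m * exp (-m * t) - l * exp (-l * t)) / (m - l)) =
    (σ * l - 1) / (m - l) *
      (exp ((m - l) * overdampedZero σ l m - m * t) - exp (-l * t)) := by
  have h0 : 0 < m - l := sub_pos.2 hlm
  have hm : 0 < σ * m - 1 := by nlinarith
  have h1 : 0 < σ * l - 1 := by linarith
  have : exp ((m - l) * overdampedZero σ l m - m * t) =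
      (σ * m - 1) / (σ * l - 1) * exp (-m * t) := by
    rw [overdampedZero, mul_div_cancel₀ _ h0.ne', sub_eq_add_neg, exp_add,
      exp_log (by positivity), neg_mul]
  have h2 : (σ * l - 1) * ((σ * m - 1) / (σ * l - 1)) = σ * m - 1 := mul_div_cancel₀ _ h1.ne'
  rw [this]
  linear_combination (-exp (-m * t) / (m - l)) * h2

lemma overdampedZero_nonneg {l m σ : ℝ} (hlm : l < m) (hσ : 0 < σ) (hσl : 1 < σ * l) :
    0 ≤ overdampedZero σ l m := by
  have h1 : 0 < σ * l - 1 := by linarith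
  refine div_nonneg (log_nonneg ?_) (sub_pos.2 hlm).le
  rw [le_div_iff₀ h1]; nlinarith

/-- The power occurring in `Acoef` in the overdamped case is `exp (-a s / 2)`, with `s` the zero of
the impulse response. -/
lemma overdamped_closed_form {l m σ μ a k δ : ℝ} (hl : 0 < l) (hlm : l < m) (hσ : 0 < σ)
    (hσl : 1 < σ * l) (ha : a = l + m) (hk : k ^ 2 = l * m) (ha' : a = μ + k ^ 2 * σ)
    (hδ : δ = m - l) :
    ((2 * (a / δ) * √(1 - μ * σ)) / (σ * a * (1 + a / δ) - 2 * (a / δ))) ^ (a / δ) =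
      exp (-a * overdampedZero σ l m / 2) := by
  have h0 : 0 < δ := by linarith
  have ha0 : 0 < a := by linarith
  have hm : 0 < σ * m - 1 := by nlinarith
  have h1 : 0 < σ * l - 1 := by linarith
  have hprod : 1 - μ * σ = (σ * l - 1) * (σ * m - 1) := by
    have : μ = l + m - l * m * σ := by rw [← hk]; linarith
    rw [this]; ring
  have hbase : (2 * (a / δ) * √(1 - μ * σ)) / (σ * a * (1 + a / δ) - 2 * (a / δ)) =
      √(1 - μ * σ) / (σ * m - 1) := by
    have hden : σ * a * (1 + a / δ) - 2 * (a / δ) = 2 * (a / δ) * (σ * m - 1) := by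
      have : m = (a + δ) / 2 := by linarith
      rw [this]; field_simp; ring
    rw [hden, mul_div_mul_left]
    positivity
  have hexp : √(1 - μ * σ) / (σ * m - 1) = exp (-(δ * overdampedZero σ l m) / 2) := by
    rw [exp_half, exp_neg, overdampedZero, ← hδ, mul_div_cancel₀ _ h0.ne', exp_log (by positivity),
      inv_div, hprod, show (σ * l - 1) / (σ * m - 1) = (σ * l - 1) * (σ * m - 1) / (σ * m - 1) ^ 2 by
        field_simp, Real.sqrt_div (by positivity), Real.sqrt_sq hm.le]
  rw [hbase, hexp, ← exp_mul]
  congr 1; field_simp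

lemma roots_overdamped {a k : ℝ} (hk : 0 < k) (h : 2 * k < a) :
    ∃ l m, 0 < l ∧ l < m ∧ a = l + m ∧ k ^ 2 = l * m ∧ √(a ^ 2 - 4 * k ^ 2) = m - l := by
  have h1 : 0 < a ^ 2 - 4 * k ^ 2 := by nlinarith
  have h2 := Real.sq_sqrt h1.le
  have h3 := Real.sqrt_pos.2 h1
  set δ := √(a ^ 2 - 4 * k ^ 2)
  refine ⟨(a - δ) / 2, (a + δ) / 2, ?_, by linarith, by ring, by nlinarith, by ring⟩
  have : δ < a := by nlinarith
  linarith

/-- The position of the zero `-1 / σ` of the transfer function relative to the poles `-l`, `-m` is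
governed by the sign of `1 - μσ`. -/
lemma overdamped_product {l m σ μ a k : ℝ} (ha : a = l + m) (hk : k ^ 2 = l * m)
    (ha' : a = μ + k ^ 2 * σ) : (σ * l - 1) * (σ * m - 1) = 1 - μ * σ := by
  have : μ = l + m - l * m * σ := by rw [← hk]; linarith
  rw [this]; ring

lemma one_lt_of_overshoot {l m σ μ a k : ℝ} (hl : 0 < l) (hlm : l < m) (hσ : 0 < σ)
    (hk0 : 0 < k) (ha : a = l + m) (hk : k ^ 2 = l * m)
    (ha' : a = μ + k ^ 2 * σ) (hμσ : μ * σ < 1) (hkσ : 1 ≤ k * σ) : 1 < σ * l := by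
  have hp := overdamped_product ha hk ha'
  have h2 : σ * l < σ * m := by nlinarith
  have h3 : 1 ≤ (σ * l) * (σ * m) := by
    calc (1:ℝ) ≤ (k * σ) ^ 2 := one_le_pow₀ hkσ
      _ = _ := by rw [mul_pow, hk]; ring
  by_contra! hcon
  have h4 : 1 < σ * m := by
    by_contra! h5
    nlinarith [mul_pos hσ hl]
  nlinarith

lemma Acoef_le_three {σ μ : ℝ} (hσ : 0 < σ) (hμ : 0 ≤ μ) (hμσ : μ * σ < 1) {n : ℕ} (hn : 0 < n)
    (hlarge : 4 < (n * π) * σ) : 1 ≤ Acoef σ μ n ∧ Acoef σ μ n ≤ 3 := by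
  have hk0 : 0 < n * π := by positivity
  rw [Acoef_eq σ μ n rfl rfl]
  generalize (n * π : ℝ) = k at *
  have hover : 2 * k < μ + k ^ 2 * σ := by nlinarith
  rw [if_pos hover, if_pos (by linarith)]
  obtain ⟨l, m, hl, hlm, ha, hk, hδ⟩ := roots_overdamped hk0 hover
  have hσl := one_lt_of_overshoot hl hlm hσ hk0 ha hk rfl hμσ (by linarith)
  rw [overdamped_closed_form hl hlm hσ hσl ha hk rfl hδ]
  have h1 : √(1 - μ * σ) ≤ 1 := by
    rw [Real.sqrt_le_one]; nlinarith
  have h2 : exp (-(μ + k ^ 2 * σ) * overdampedZero σ l m / 2) ≤ 1 := by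
    rw [exp_le_one_iff]
    have := overdampedZero_nonneg hlm hσ hσl
    have : 0 ≤ (μ + k ^ 2 * σ) * overdampedZero σ l m := by positivity
    linarith
  have h3 := Real.sqrt_nonneg (1 - μ * σ)
  have h4 := exp_pos (-(μ + k ^ 2 * σ) * overdampedZero σ l m / 2)
  constructor
  · have : 0 ≤ √(1 - μ * σ) * exp (-(μ + k ^ 2 * σ) * overdampedZero σ l m / 2) := by positivity
    linarith
  · have := mul_le_one₀ h1 h4.le h2
    linarith

/-- The coefficient of the `n`-th mode in `Gconst`, with value `1` when `μσ ≥ 1`. -/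
def modeGain (σ μ : ℝ) (n : ℕ) : ℝ := if 1 ≤ μ * σ then 1 else Acoef σ μ n

lemma exists_kernel_overdamped {σ μ : ℝ} (hσ : 0 < σ) {n : ℕ} {k a : ℝ}
    (hk : k = n * π) (hk0 : 0 < k) (ha : a = μ + k ^ 2 * σ) (h : 2 * k < a) :
    ∃ e v, IsKernel a k e v ∧
      ∀ T, 0 ≤ T → ∫ s in 0..T, |k * (e s + σ * v s)| ≤ modeGain σ μ n / k := by
  obtain ⟨l, m, hl, hlm, ha', hk', hδ⟩ := roots_overdamped hk0 h
  have K := isKernel_overdamped hl hlm ha' hk'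
  have hp := overdamped_product ha' hk' ha
  refine ⟨_, _, K, fun T hT => ?_⟩
  have hlm' : σ * l < σ * m := by nlinarith
  unfold modeGain
  split_ifs with hμσ
  · refine K.l1_nonneg hk0 (fun r hr => overdamped_nonneg hlm hσ ?_ hr) hT
    by_contra! hcon
    nlinarith
  · rw [not_le] at hμσ
    rw [Acoef_eq σ μ n hk ha, if_pos h]
    split_ifs with hkσ
    · have hσl := one_lt_of_overshoot hl hlm hσ hk0 ha' hk' ha hμσ hkσ
      rw [overdamped_closed_form hl hlm hσ hσl ha' hk' ha hδ]
      have hc : 0 < (σ * l - 1) / (m - l) := div_pos (by linarith) (by linarith)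
      refine K.l1_one_change hk0 ha hμσ (overdampedZero_nonneg hlm hσ hσl) ?_ ?_ T
      · intro r hr
        rw [overdamped_factor hlm hσ hσl]
        refine mul_nonneg hc.le (sub_nonneg.2 (exp_le_exp.2 ?_))
        nlinarith [hr.2]
      · intro r hr
        rw [overdamped_factor hlm hσ hσl]
        refine mul_nonpos_of_nonneg_of_nonpos hc.le (sub_nonpos.2 (exp_le_exp.2 ?_))
        nlinarith
    · refine K.l1_nonneg hk0 (fun r hr => overdamped_nonneg hlm hσ ?_ hr) hT
      by_contra! hcon
      have : (k * σ) ^ 2 = (σ * l) * (σ * m) := by rw [mul_pow, hk']; ring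
      have h2 : 0 < k * σ := by positivity
      nlinarith

lemma exists_kernel_critical {σ μ : ℝ} (hσ : 0 < σ) {n : ℕ} {k a : ℝ}
    (hk : k = n * π) (hk0 : 0 < k) (ha : a = μ + k ^ 2 * σ) (h : a = 2 * k) :
    ∃ e v, IsKernel a k e v ∧
      ∀ T, 0 ≤ T → ∫ s in 0..T, |k * (e s + σ * v s)| ≤ modeGain σ μ n / k := by
  have K := isKernel_critical hk0 h
  refine ⟨_, _, K, fun T hT => ?_⟩
  have hfac : ∀ r, r * exp (-k * r) + σ * ((1 - k * r) * exp (-k * r)) =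
      (σ - (k * σ - 1) * r) * exp (-k * r) := fun r => by ring
  have hsq : (k * σ - 1) ^ 2 = 1 - μ * σ := by
    have : μ = 2 * k - k ^ 2 * σ := by linarith
    rw [this]; ring
  have hnonneg : k * σ ≤ 1 → ∀ r, 0 ≤ r →
      0 ≤ r * exp (-k * r) + σ * ((1 - k * r) * exp (-k * r)) := fun h1 r hr => by
    rw [hfac]
    refine mul_nonneg ?_ (exp_pos _).le
    nlinarith
  unfold modeGain
  split_ifs with hμσ
  · refine K.l1_nonneg hk0 (hnonneg ?_) hT
    nlinarith
  · rw [not_le] at hμσ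
    rw [Acoef_eq σ μ n hk ha, if_neg h.not_gt, if_pos h]
    have hR : 0 < √(1 - μ * σ) := Real.sqrt_pos.2 (by linarith)
    have hR' : √(1 - μ * σ) = |k * σ - 1| := by rw [← hsq, Real.sqrt_sq_eq_abs]
    split_ifs with hkσ
    · have h1 : 0 < k * σ - 1 := by linarith
      rw [show (-1 - 1 / √(1 - μ * σ)) = -a * (σ / (k * σ - 1)) / 2 by
        rw [hR', abs_of_pos h1, h]; field_simp; ring]
      refine K.l1_one_change hk0 ha hμσ (by positivity) ?_ ?_ T
      · intro r hr
        have := (le_div_iff₀ h1).1 hr.2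
        rw [hfac]
        exact mul_nonneg (by linarith) (exp_pos _).le
      · intro r hr
        have := (div_le_iff₀ h1).1 hr
        rw [hfac]
        exact mul_nonpos_of_nonpos_of_nonneg (by linarith) (exp_pos _).le
    · refine K.l1_nonneg hk0 (hnonneg ?_) hT
      by_contra! hcon
      rw [abs_of_pos (by linarith)] at hR'
      exact hkσ (by linarith)

lemma exists_kernel_underdamped {σ μ : ℝ} (hσ : 0 < σ) (hμ : 0 ≤ μ) {n : ℕ} {k a : ℝ}
    (hk : k = n * π) (hk0 : 0 < k) (ha : a = μ + k ^ 2 * σ) (h : a < 2 * k) :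
    ∃ e v, IsKernel a k e v ∧
      ∀ T, 0 ≤ T → ∫ s in 0..T, |k * (e s + σ * v s)| ≤ modeGain σ μ n / k := by
  have ha0 : 0 < a := by rw [ha]; positivity
  have hrad : 0 < 4 * k ^ 2 - a ^ 2 := by nlinarith
  have hμσ : μ * σ < 1 := by
    by_contra! hcon
    have : 2 * k * σ ≤ a * σ := by rw [ha]; nlinarith [sq_nonneg (k * σ - 1)]
    nlinarith
  have hW := Real.sqrt_pos.2 hrad
  have hWsq := Real.sq_sqrt hrad.le
  obtain ⟨w, hw⟩ : ∃ w, √(4 * k ^ 2 - a ^ 2) = 2 * w := ⟨_ / 2, (mul_div_cancel₀ _ two_ne_zero).symm⟩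
  rw [hw] at hW hWsq
  have hw0 : 0 < w := by linarith
  have K := isKernel_underdamped ha0 hw0 (show k ^ 2 = (a / 2) ^ 2 + w ^ 2 by linarith)
  refine ⟨_, _, K, fun T hT => ?_⟩
  rw [modeGain, if_neg hμσ.not_ge, Acoef_eq σ μ n hk ha, if_neg h.le.not_gt, if_neg h.ne, hw,
    mul_comm σ μ]
  have hm : 0 < 1 - μ * σ := by linarith
  have hR := Real.sqrt_pos.2 hm
  have hRsq := Real.sq_sqrt hm.le
  set R := √(1 - μ * σ)
  set X := (2 - μ * σ - k ^ 2 * σ ^ 2) / (2 * R) with hX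
  clear_value X
  have hXR : X * R = 1 - σ * a / 2 := by rw [hX, ha]; field_simp; ring
  have hpyth : (σ * w) ^ 2 + (X * R) ^ 2 = R ^ 2 := by
    rw [hXR, hRsq]
    have : w ^ 2 = k ^ 2 - a ^ 2 / 4 := by linarith
    rw [mul_pow, this, ha]; ring
  have hsw : 0 < σ * w := by positivity
  have hX1 : 1 - X ^ 2 = (σ * w / R) ^ 2 := by
    rw [div_pow, eq_div_iff (by positivity)]; linarith
  have hX2 : X ^ 2 ≤ 1 := by nlinarith [sq_nonneg (σ * w / R)]
  have hX3 := abs_le.1 ((sq_le_one_iff_abs_le_one X).1 hX2)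
  have hcos : cos (arccos X) = X := cos_arccos hX3.1 hX3.2
  have hsin : sin (arccos X) = σ * w / R := by
    rw [sin_arccos, hX1, Real.sqrt_sq (by positivity)]
  have hθ0 := arccos_nonneg X
  have hθπ := arccos_le_pi X
  set θ := arccos X
  -- the impulse response is a damped sine with phase `θ`, so its first zero is `(π - θ) / w`
  have hfac : ∀ r, exp (-(a / 2) * r) * sin (w * r) / w +
      σ * (exp (-(a / 2) * r) * (cos (w * r) - a / (2 * w) * sin (w * r))) =
      R / w * exp (-(a / 2) * r) * sin (w * r + θ) := fun r => by
    rw [sin_add, hcos, hsin]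
    have : X = (1 - σ * a / 2) / R := by rw [← hXR]; field_simp
    rw [this]; field_simp; ring
  have hpi : ∀ r, w * (r + π / w) = w * r + π := fun r => by field_simp
  have hq : ∀ r, exp (-(a / 2) * (r + π / w)) = exp (-(a * π / (2 * w))) * exp (-(a / 2) * r) :=
    fun r => by rw [← exp_add]; congr 1; field_simp; ring
  have hq1 : exp (-(a * π / (2 * w))) < 1 := by rw [exp_lt_one_iff]; simp; positivity
  have hlim : ∀ r, w * ((π - θ) / w) = π - θ := fun r => by field_simp
  have hc : ∀ r, 0 < R / w * exp (-(a / 2) * r) := fun r => by positivity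
  have key := K.l1_periodic (σ := σ) hk0 ha hμσ (s := (π - θ) / w) (τ := π / w)
    (q := exp (-(a * π / (2 * w)))) (div_nonneg (by linarith) hw0.le)
    (by gcongr; linarith) (exp_pos _).le hq1
    (fun r hr => by
      have h2 := (le_div_iff₀ hw0).1 hr.2
      rw [hfac]
      refine mul_nonneg (hc r).le (sin_nonneg_of_nonneg_of_le_pi ?_ (by linarith))
      have := mul_nonneg hw0.le hr.1
      linarith)
    (fun r hr => by
      have h1 := (div_le_iff₀ hw0).1 hr.1
      have h2 := (le_div_iff₀ hw0).1 hr.2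
      rw [hfac]
      refine mul_nonpos_of_nonneg_of_nonpos (hc r).le ?_
      rw [← neg_nonneg, ← sin_sub_pi]
      exact sin_nonneg_of_nonneg_of_le_pi (by linarith) (by linarith))
    (fun r => by simp only [hpi, hq, sin_add_pi]; ring)
    (fun r => by simp only [hpi, hq, sin_add_pi, cos_add_pi]; ring) T
  refine key.trans (le_of_eq ?_)
  congr 2
  have hE : exp (-a * ((π - θ) / w) / 2) =
      exp (a / (2 * w) * θ) * exp (-(a * π / (2 * w))) := by
    rw [← exp_add]; congr 1; field_simp; ring
  have h1q : 1 - exp (-(a * π / (2 * w))) ≠ 0 := by linarith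
  have h2q : exp (a * π / (2 * w)) - 1 ≠ 0 := by
    have : 1 < exp (a * π / (2 * w)) := by rw [one_lt_exp_iff]; positivity
    linarith
  rw [hE, div_eq_div_iff h1q h2q]
  have : exp (-(a * π / (2 * w))) * exp (a * π / (2 * w)) = 1 := by rw [← exp_add]; simp
  linear_combination (2 * R * exp (a / (2 * w) * θ)) * this

/-- The `n`-th mode has an impulse response of `L¹` norm at most `modeGain σ μ n / k`. -/
lemma exists_kernel {σ μ : ℝ} (hσ : 0 < σ) (hμ : 0 ≤ μ) {n : ℕ} {k a : ℝ}
    (hk : k = n * π) (hk0 : 0 < k) (ha : a = μ + k ^ 2 * σ) :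
    ∃ e v, IsKernel a k e v ∧
      ∀ T, 0 ≤ T → ∫ s in 0..T, |k * (e s + σ * v s)| ≤ modeGain σ μ n / k := by
  rcases lt_trichotomy a (2 * k) with h | h | h
  · exact exists_kernel_underdamped hσ hμ hk hk0 ha h
  · exact exists_kernel_critical hσ hk hk0 ha h
  · exact exists_kernel_overdamped hσ hk hk0 ha h

/-! ### Parseval's identity for sine series -/

/-- Integration against the odd extension of `f|(0,1]` to `[-1,1]`. -/
lemma integral_oddExt {f : ℝ → ℝ} (hf : Continuous f) {F : ℝ → ℂ} (hF : Continuous F) :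
    ∫ x in (-1:ℝ)..1, F x * (if 0 < x then (f x : ℂ) else -(f (-x) : ℂ)) =
      ∫ x in (0:ℝ)..1, (F x - F (-x)) * f x := by
  have c1 : Continuous fun x : ℝ => F x * (f x : ℂ) := by fun_prop
  have c2 : Continuous fun x : ℝ => F x * (-(f (-x) : ℂ)) := by fun_prop
  have c3 : Continuous fun x : ℝ => F (-x) * (f x : ℂ) := by fun_prop
  have h1 : EqOn (fun x : ℝ => F x * (f x : ℂ))
      (fun x => F x * (if 0 < x then (f x : ℂ) else -(f (-x) : ℂ))) (uIoc 0 1) := fun x hx => by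
    rw [uIoc_of_le zero_le_one] at hx
    simp only [if_pos hx.1]
  have h2 : EqOn (fun x : ℝ => F x * (-(f (-x) : ℂ)))
      (fun x => F x * (if 0 < x then (f x : ℂ) else -(f (-x) : ℂ))) (uIoc (-1) 0) := fun x hx => by
    rw [uIoc_of_le (by norm_num)] at hx
    simp only [if_neg hx.2.not_gt]
  have i1 := (c1.intervalIntegrable (μ := volume) 0 1).congr h1
  have i2 := (c2.intervalIntegrable (μ := volume) (-1) 0).congr h2
  rw [← integral_add_adjacent_intervals i2 i1,
    ← intervalIntegral.integral_congr_ae (Eventually.of_forall h1),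
    ← intervalIntegral.integral_congr_ae (Eventually.of_forall h2)]
  have h3 := intervalIntegral.integral_comp_neg (a := 0) (b := 1)
    (fun x : ℝ => F x * (-(f (-x) : ℂ)))
  rw [neg_zero] at h3
  rw [← h3, ← intervalIntegral.integral_add]
  · refine integral_congr fun x _ => ?_
    simp only [neg_neg]; ring
  · simp only [neg_neg]
    apply Continuous.intervalIntegrable; fun_prop
  · exact c1.intervalIntegrable _ _

lemma fourierCoeffOn_oddExt {f : ℝ → ℝ} (hf : Continuous f) (n : ℤ) :
    ‖fourierCoeffOn (show (-1:ℝ) < 1 by norm_num)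
      (fun x => if 0 < x then (f x : ℂ) else -(f (-x) : ℂ)) n‖ ^ 2 =
      (∫ x in (0:ℝ)..1, f x * sin (n * π * x)) ^ 2 := by
  rw [fourierCoeffOn_eq_integral]
  simp only [smul_eq_mul]
  rw [integral_oddExt hf (F := fun x : ℝ => (fourier (-n) : AddCircle (1 - (-1 : ℝ)) → ℂ) x)
    (by fun_prop)]
  have h : ∀ x : ℝ, ((fourier (-n) : AddCircle (1 - (-1 : ℝ)) → ℂ) (x : AddCircle (1 - (-1 : ℝ)))
      - (fourier (-n) : AddCircle (1 - (-1 : ℝ)) → ℂ) ((-x : ℝ) : AddCircle (1 - (-1 : ℝ)))) * f x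
      = (-2 * Complex.I) * ((f x * sin (n * π * x) : ℝ) : ℂ) := fun x => by
    rw [fourier_coe_apply, fourier_coe_apply]
    push_cast
    rw [Complex.sin]
    have e1 : 2 * (π : ℂ) * Complex.I * (-n) * x / (1 - -1) = -(n * π * x) * Complex.I := by ring
    have e2 : 2 * (π : ℂ) * Complex.I * (-n) * -x / (1 - -1) = (n * π * x) * Complex.I := by ring
    rw [e1, e2]
    linear_combination ((Complex.exp (-(n * π * x) * Complex.I)
      - Complex.exp ((n * π * x) * Complex.I)) * f x) * Complex.I_sq
  simp_rw [h]
  rw [intervalIntegral.integral_const_mul, intervalIntegral.integral_ofReal]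
  rw [norm_smul, norm_mul, Complex.norm_real, mul_pow, mul_pow]
  simp
  ring

/-- Parseval's identity for the sine basis of `L²(0,1)`, from the Fourier series of the odd
extension on `[-1,1]`. -/
lemma hasSum_sine {f : ℝ → ℝ} (hf : Continuous f) :
    HasSum (fun n : ℕ => 2 * (∫ x in (0:ℝ)..1, f x * sin (((n + 1 : ℕ) * π) * x)) ^ 2)
      (∫ x in (0:ℝ)..1, f x ^ 2) := by
  set g : ℝ → ℂ := fun x => if 0 < x then (f x : ℂ) else -(f (-x) : ℂ) with hg
  have hgm : Measurable g := by
    refine Measurable.ite measurableSet_Ioi ?_ ?_ <;> fun_prop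
  obtain ⟨C, hC⟩ := (isCompact_Icc (a := (-1:ℝ)) (b := 1)).exists_bound_of_continuousOn hf.continuousOn
  have hL2 : MemLp g 2 (volume.restrict (Ioc (-1) 1)) := by
    refine MemLp.of_bound hgm.aestronglyMeasurable C ?_
    refine (ae_restrict_mem measurableSet_Ioc).mono fun x hx => ?_
    simp only [hg]
    split_ifs
    · simpa using hC x ⟨hx.1.le, hx.2⟩
    · simpa using hC (-x) ⟨by linarith [hx.2], by linarith [hx.1]⟩
  have hP := hasSum_sq_fourierCoeffOn (show (-1:ℝ) < 1 by norm_num) hL2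
  simp only [hg, fourierCoeffOn_oddExt hf] at hP
  have hval : ((1:ℝ) - -1)⁻¹ • ∫ x in (-1:ℝ)..1, ‖if 0 < x then (f x : ℂ) else -(f (-x) : ℂ)‖ ^ 2 =
      ∫ x in (0:ℝ)..1, f x ^ 2 := by
    have h0 : ∀ x : ℝ, ‖if 0 < x then (f x : ℂ) else -(f (-x) : ℂ)‖ ^ 2 = f |x| ^ 2 := fun x => by
      split_ifs with hx
      · simp [abs_of_pos hx]
      · simp [abs_of_nonpos (not_lt.1 hx)]
    simp_rw [h0]
    have hc : Continuous fun x : ℝ => f |x| ^ 2 := by fun_prop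
    rw [← integral_add_adjacent_intervals (hc.intervalIntegrable (-1) 0) (hc.intervalIntegrable 0 1)]
    have h3 := intervalIntegral.integral_comp_neg (a := 0) (b := 1) (fun x : ℝ => f |x| ^ 2)
    rw [neg_zero] at h3
    rw [← h3]
    simp only [abs_neg]
    have h4 : ∫ x in (0:ℝ)..1, f |x| ^ 2 = ∫ x in (0:ℝ)..1, f x ^ 2 := by
      refine integral_congr fun x hx => ?_
      rw [uIcc_of_le zero_le_one] at hx
      simp only [abs_of_nonneg hx.1]
    rw [h4, smul_eq_mul]; ring
  rw [hval] at hP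
  have h1 := hP.nat_add_neg
  simp only [Int.cast_zero, zero_mul, sin_zero, mul_zero, intervalIntegral.integral_zero,
    zero_pow two_ne_zero, add_zero] at h1
  have h2 := (hasSum_nat_add_iff' 1).2 h1
  simp only [Finset.range_one, Finset.sum_singleton, Int.cast_neg, Int.cast_natCast, neg_mul,
    sin_neg, mul_neg, intervalIntegral.integral_neg, neg_sq, ← two_mul, zero_mul,
    sin_zero, mul_zero, intervalIntegral.integral_zero, ne_eq, OfNat.ofNat_ne_zero,
    not_false_eq_true, zero_pow, sub_zero, CharP.cast_eq_zero] at h2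
  exact h2

/-! ### The equations of the modes -/

lemma hasDerivAt_integral_of_continuous {F F' : ℝ → ℝ → ℝ}
    (hF : Continuous (Function.uncurry F)) (hF' : Continuous (Function.uncurry F'))
    (h : ∀ t x, HasDerivAt (fun s => F s x) (F' t x) t) (t : ℝ) :
    HasDerivAt (fun t => ∫ x in (0:ℝ)..1, F t x) (∫ x in (0:ℝ)..1, F' t x) t := by
  obtain ⟨C, hC⟩ := ((isCompact_Icc (a := t - 1) (b := t + 1)).prod
    (isCompact_Icc (a := (0:ℝ)) (b := 1))).exists_bound_of_continuousOn hF'.continuousOn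
  have c1 : ∀ s, Continuous (F s) := fun s => hF.comp (Continuous.prodMk_right s)
  have c2 : ∀ s, Continuous (F' s) := fun s => hF'.comp (Continuous.prodMk_right s)
  refine (intervalIntegral.hasDerivAt_integral_of_dominated_loc_of_deriv_le (F' := F')
    (bound := fun _ => C) (Icc_mem_nhds (show t - 1 < t by linarith) (show t < t + 1 by linarith))
    (Eventually.of_forall fun s => (c1 s).aestronglyMeasurable) ((c1 t).intervalIntegrable _ _)
    (c2 t).aestronglyMeasurable ?_ (by simp) ?_).2
  · refine Eventually.of_forall fun x hx s hs => ?_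
    rw [uIoc_of_le zero_le_one] at hx
    exact hC (s, x) ⟨hs, hx.1.le, hx.2⟩
  · exact Eventually.of_forall fun x _ s _ => h s x

lemma hasDerivAt_u_t {f : ℝ → ℝ → ℝ} (hf : ContDiff ℝ 1 (Function.uncurry f)) (t x : ℝ) :
    HasDerivAt (fun s => f s x) (u_t f t x) t := by
  have h1 : DifferentiableAt ℝ (fun s => f s x) t := by
    have : Differentiable ℝ (Function.uncurry f) := hf.differentiable one_ne_zero
    exact (this.comp (differentiable_id.prodMk (differentiable_const x))).differentiableAt
  exact h1.hasDerivAt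

lemma u_t_contDiff {f : ℝ → ℝ → ℝ} {m : ℕ} (hf : ContDiff ℝ (m + 1) (Function.uncurry f)) :
    ContDiff ℝ m (Function.uncurry (u_t f)) := by
  have hd : Differentiable ℝ (Function.uncurry f) := hf.differentiable (by simp)
  have h1 : Function.uncurry (u_t f) =
      fun p : ℝ × ℝ => fderiv ℝ (Function.uncurry f) p ((1:ℝ), (0:ℝ)) := by
    ext ⟨t, x⟩
    have h2 := (hd (t, x)).hasFDerivAt.comp_hasDerivAt t
      ((hasDerivAt_id t).prodMk (hasDerivAt_const t x))
    exact h2.deriv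
  rw [h1]
  exact (hf.fderiv_right (m := m) le_rfl).clm_apply contDiff_const

lemma sine_by_parts {f : ℝ → ℝ} (hf : ContDiff ℝ 2 f) {k : ℝ} (hk : sin k = 0) (h1 : f 1 = 0) :
    ∫ x in (0:ℝ)..1, deriv (deriv f) x * sin (k * x) =
      k * f 0 - k ^ 2 * ∫ x in (0:ℝ)..1, f x * sin (k * x) := by
  have hf1 : ContDiff ℝ 1 (deriv f) := ((contDiff_succ_iff_deriv (n := 1)).1 hf).2.2
  have c0 : Continuous f := hf.continuous
  have c2 : Continuous (deriv (deriv f)) := hf1.continuous_deriv le_rfl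
  have key := integral_eq_sub_of_hasDerivAt (a := 0) (b := 1)
    (f := fun x => deriv f x * sin (k * x) - k * (f x * cos (k * x)))
    (f' := fun x => deriv (deriv f) x * sin (k * x) + k ^ 2 * (f x * sin (k * x)))
    (fun x _ => by
      have hl : HasDerivAt (fun x => k * x) k x := by simpa using (hasDerivAt_id x).const_mul k
      have d1 : HasDerivAt f (deriv f x) x := (hf.differentiable two_ne_zero x).hasDerivAt
      have d2 : HasDerivAt (deriv f) (deriv (deriv f) x) x :=
        (hf1.differentiable one_ne_zero x).hasDerivAt
      refine ((d2.mul hl.sin).sub ((d1.mul hl.cos).const_mul k)).congr_deriv ?_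
      ring)
    (by apply Continuous.intervalIntegrable; fun_prop)
  rw [intervalIntegral.integral_add, intervalIntegral.integral_const_mul] at key
  · simp [hk, h1] at key
    linarith
  · apply Continuous.intervalIntegrable; fun_prop
  · apply Continuous.intervalIntegrable; fun_prop

/-- The sine coefficient of `u t` at frequency `k`. -/
def mode (u : ℝ → ℝ → ℝ) (k t : ℝ) : ℝ := ∫ x in (0:ℝ)..1, u t x * sin (k * x)

lemma mode_hasDerivAt {f : ℝ → ℝ → ℝ} (hf : ContDiff ℝ 1 (Function.uncurry f)) (k t : ℝ) :
    HasDerivAt (mode f k) (mode (u_t f) k t) t := by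
  have c1 : Continuous (Function.uncurry f) := hf.continuous
  have c2 : Continuous (Function.uncurry (u_t f)) :=
    (u_t_contDiff (m := 0) (by simpa using hf)).continuous
  refine hasDerivAt_integral_of_continuous (F := fun t x => f t x * sin (k * x))
    (F' := fun t x => u_t f t x * sin (k * x)) ?_ ?_ (fun t x => ?_) t
  · exact c1.mul (by fun_prop)
  · exact c2.mul (by fun_prop)
  · exact (hasDerivAt_u_t hf t x).mul_const _

/-- Each sine coefficient is a damped oscillator driven by `d + σ d'`; the forcing comes from the
boundary terms of the integration by parts. -/
lemma mode_ode {σ μ : ℝ} {d : ℝ → ℝ} {u : ℝ → ℝ → ℝ} (hu : IsClassicalSolution σ μ d u)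
    {k : ℝ} (hk : sin k = 0) {t : ℝ} (ht : 0 < t) :
    HasDerivAt (mode (u_t u) k)
      (k * (d t + σ * deriv d t) - (μ + k ^ 2 * σ) * mode (u_t u) k t - k ^ 2 * mode u k t) t := by
  obtain ⟨hC2, hCt, hpde, hbc⟩ := hu
  have hC1 : ContDiff ℝ 1 (Function.uncurry (u_t u)) :=
    u_t_contDiff (m := 1) (by simpa [one_add_one_eq_two] using hC2)
  refine (mode_hasDerivAt hC1 k t).congr_deriv ?_
  have hf : ContDiff ℝ 2 (u t) := hC2.comp (contDiff_const.prodMk contDiff_id)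
  have hg : ContDiff ℝ 2 (u_t u t) := hCt t ht.le
  have hev : ∀ᶠ s in nhds t, 0 ≤ s := (eventually_gt_nhds ht).mono fun _ h => h.le
  have hb1 : u_t u t 1 = 0 := by
    have : (fun s => u s 1) =ᶠ[nhds t] fun _ => 0 := hev.mono fun s hs => (hbc s hs).2
    rw [u_t, this.deriv_eq, deriv_const]
  have hb0 : u_t u t 0 = deriv d t := by
    have : (fun s => u s 0) =ᶠ[nhds t] d := hev.mono fun s hs => (hbc s hs).1
    rw [u_t, this.deriv_eq]
  have s1 := sine_by_parts hf hk (hbc t ht.le).2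
  have s2 := sine_by_parts hg hk hb1
  rw [(hbc t ht.le).1] at s1
  rw [hb0] at s2
  have hcont : ∀ {f : ℝ → ℝ}, ContDiff ℝ 2 f → Continuous (deriv (deriv f)) := fun hf =>
    (((contDiff_succ_iff_deriv (n := 1)).1 hf).2.2).continuous_deriv le_rfl
  have cf := hcont hf
  have cg := hcont hg
  have cg0 : Continuous (u_t u t) := hg.continuous
  have e1 : mode (u_t (u_t u)) k t = ∫ x in (0:ℝ)..1,
      ((deriv (deriv (u t)) x * sin (k * x) + σ * (deriv (deriv (u_t u t)) x * sin (k * x)))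
        - μ * (u_t u t x * sin (k * x))) := by
    refine integral_congr fun x hx => ?_
    rw [uIcc_of_le zero_le_one] at hx
    have := hpde t x ht.le hx
    simp only [u_tt, u_xx, u_txx] at this
    change deriv (deriv fun τ => u τ x) t * sin (k * x) = _
    rw [this]
    ring
  rw [e1, intervalIntegral.integral_sub, intervalIntegral.integral_add,
    intervalIntegral.integral_const_mul, intervalIntegral.integral_const_mul, s1, s2]
  · unfold mode; ring
  all_goals apply Continuous.intervalIntegrable; fun_prop

/-! ### Summation over the modes -/

lemma summable_modeGain {σ μ : ℝ} (hσ : 0 < σ) (hμ : 0 ≤ μ) :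
    Summable fun n : ℕ => modeGain σ μ (n + 1) ^ 2 / ((n : ℝ) + 1) ^ 2 := by
  have h0 : Summable fun n : ℕ => 9 * (1 / ((n : ℝ) + 1) ^ 2) := by
    have := (summable_nat_add_iff 1).2 hasSum_zeta_two.summable
    simpa using this.mul_left 9
  refine h0.of_norm_bounded_eventually_nat ?_
  have hlim : Tendsto (fun n : ℕ => ((n + 1 : ℕ) * π) * σ) atTop atTop :=
    ((tendsto_natCast_atTop_atTop.comp (tendsto_add_atTop_nat 1)).atTop_mul_const
      pi_pos).atTop_mul_const hσ
  filter_upwards [hlim.eventually_gt_atTop 4] with n hn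
  have h1 : 1 ≤ modeGain σ μ (n + 1) ∧ modeGain σ μ (n + 1) ≤ 3 := by
    unfold modeGain
    split_ifs with h
    · norm_num
    · exact Acoef_le_three hσ hμ (not_le.1 h) n.succ_pos hn
  rw [Real.norm_of_nonneg (by positivity), div_eq_mul_one_div]
  gcongr
  nlinarith

lemma Gconst_eq (σ μ : ℝ) :
    Gconst μ σ = 1 / π * √(2 * ∑' n : ℕ, modeGain σ μ (n + 1) ^ 2 / ((n : ℝ) + 1) ^ 2) := by
  unfold Gconst modeGain
  split_ifs with h
  · have h1 := (hasSum_nat_add_iff' 1).2 hasSum_zeta_two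
    have h2 : ∑' n : ℕ, (1:ℝ) ^ 2 / ((n : ℝ) + 1) ^ 2 = π ^ 2 / 6 := by
      rw [← show π ^ 2 / 6 - ∑ i ∈ Finset.range 1, 1 / (i : ℝ) ^ 2 = π ^ 2 / 6 by simp, ← h1.tsum_eq]
      simp
    rw [h2, show 2 * (π ^ 2 / 6) = π ^ 2 / 3 by ring, Real.sqrt_div (by positivity),
      Real.sqrt_sq pi_pos.le]
    have := pi_pos
    field_simp
  · rfl

/-- If the modes are bounded by transients `z` plus constants `c`, and the transients decay pointwise
and are dominated by a square-summable sequence, then Tannery's theorem gives the limsup. -/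
theorem limsup_le_of_modes {N : ℝ → ℝ} (hN0 : ∀ t, 0 ≤ N t) {y z : ℕ → ℝ → ℝ} {c b : ℕ → ℝ}
    (hN : ∀ t, HasSum (fun n => 2 * y n t ^ 2) (N t ^ 2))
    (hy : ∀ n t, 1 ≤ t → |y n t| ≤ z n t + c n)
    (hz : ∀ n, Tendsto (z n) atTop (nhds 0))
    (hzb : ∀ n t, 1 ≤ t → |z n t| ≤ b n)
    (hb : Summable fun n => b n ^ 2) (hc : Summable fun n => c n ^ 2) :
    limsup N atTop ≤ √(2 * ∑' n, c n ^ 2) := by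
  have hbound : Summable fun n => 2 * (b n ^ 2 + c n ^ 2) := (hb.add hc).mul_left 2
  have hdom : ∀ t, 1 ≤ t → ∀ n, ‖(z n t + c n) ^ 2‖ ≤ 2 * (b n ^ 2 + c n ^ 2) := fun t ht n => by
    rw [Real.norm_of_nonneg (sq_nonneg _)]
    have h1 : z n t ^ 2 ≤ b n ^ 2 := sq_le_sq' (by linarith [(abs_le.1 (hzb n t ht)).1])
      ((le_abs_self _).trans (hzb n t ht))
    nlinarith [sq_nonneg (z n t - c n)]
  have hT : Tendsto (fun t => √(2 * ∑' n, (z n t + c n) ^ 2)) atTop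
      (nhds (√(2 * ∑' n, c n ^ 2))) := by
    refine ((tendsto_tsum_of_dominated_convergence hbound (fun n => ?_) ?_).const_mul 2).sqrt
    · simpa using ((hz n).add_const (c n)).pow 2
    · filter_upwards [eventually_ge_atTop 1] with t ht using hdom t ht
  rw [← hT.limsup_eq]
  refine limsup_le_limsup ?_ ?_ hT.isBoundedUnder_le
  · filter_upwards [eventually_ge_atTop 1] with t ht
    refine Real.le_sqrt_of_sq_le ?_
    rw [← (hN t).tsum_eq, tsum_mul_left]
    have h2 : Summable fun n => (z n t + c n) ^ 2 := hbound.of_norm_bounded (hdom t ht)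
    have h1 : Summable fun n => y n t ^ 2 := (summable_mul_left_iff two_ne_zero).1 (hN t).summable
    refine mul_le_mul_of_nonneg_left (h1.tsum_le_tsum (fun n => ?_) h2) zero_le_two
    exact sq_le_sq.2 ((hy n t ht).trans (le_abs_self _))
  · exact isCoboundedUnder_le_of_le atTop hN0

/-- `G(μ,σ)` is an upper bound for the asymptotic gain of the
displacement in the spatial L² norm, for all `σ > 0`, `μ ≥ 0`. -/
theorem asymptotic_gain_L2_upper_bound
    (σ μ : ℝ) (hσ : 0 < σ) (hμ : 0 ≤ μ)
    (d : ℝ → ℝ) (hd : BddC2 d)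
    (u : ℝ → ℝ → ℝ) (hu : IsClassicalSolution σ μ d u) :
    Filter.limsup (fun t => L2Norm u t) Filter.atTop ≤ Gconst μ σ * supD d := by
  obtain ⟨hdC, M, hM⟩ := hd
  have hD : ∀ t, 0 ≤ t → |d t| ≤ supD d := fun t ht =>
    le_csSup ⟨M, by rintro _ ⟨s, hs, rfl⟩; exact hM s hs⟩ ⟨t, ht, rfl⟩
  have hD0 : 0 ≤ supD d := (abs_nonneg _).trans (hD 0 le_rfl)
  have hC2 := hu.1
  have hC1 : ContDiff ℝ 1 (Function.uncurry u) := hC2.of_le one_le_two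
  have cu : ∀ t, Continuous (u t) := fun t => hC2.continuous.comp (Continuous.prodMk_right t)
  have cut : Continuous (u_t u 1) := (u_t_contDiff (m := 1)
    (by simpa [one_add_one_eq_two] using hC2)).continuous.comp (Continuous.prodMk_right 1)
  -- the modes are numbered from `0`, so the `n`-th frequency is `(n + 1) π`
  set k : ℕ → ℝ := fun n => (n + 1 : ℕ) * π with hkdef
  have hk0 : ∀ n, 0 < k n := fun n => by simp only [hkdef]; positivity
  have hsin : ∀ n, sin (k n) = 0 := fun n => sin_nat_mul_pi _
  choose e v K hL1 using fun n => exists_kernel hσ hμ (n := n + 1) (k := k n) rfl (hk0 n) rfl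
  obtain ⟨C, hC⟩ := (isCompact_Icc (a := (0:ℝ)) (b := 1)).exists_bound_of_continuousOn
    cut.continuousOn
  have hC0 : 0 ≤ C := (norm_nonneg _).trans (hC 0 ⟨le_rfl, zero_le_one⟩)
  have hvel : ∀ n, |mode (u_t u) (k n) 1| ≤ C := fun n => by
    have := intervalIntegral.norm_integral_le_of_norm_le_const (a := 0) (b := 1) (C := C)
      (f := fun x => u_t u 1 x * sin (k n * x)) (fun x hx => by
        rw [uIoc_of_le zero_le_one] at hx
        rw [norm_mul]
        exact (mul_le_of_le_one_right (norm_nonneg _) (abs_sin_le_one _)).trans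
          (hC x ⟨hx.1.le, hx.2⟩))
    rwa [sub_zero, abs_one, mul_one] at this
  have hpos : ∀ n, 0 ≤ μ + k n ^ 2 * σ := fun n => by positivity
  have hk1 : ∀ n, 1 ≤ k n := fun n => by
    have h3 := pi_gt_three
    have : (1:ℝ) ≤ (n + 1 : ℕ) := by exact_mod_cast Nat.le_add_left 1 n
    simp only [hkdef]; nlinarith
  have hinv : Summable fun n => 1 / k n ^ 2 := by
    have := ((summable_nat_add_iff 1).2 hasSum_zeta_two.summable).mul_right (1 / π ^ 2)
    refine this.congr fun n => ?_
    simp only [hkdef]; rw [mul_pow]; field_simp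
  -- the initial time is `1`, since the mode equations are available only for positive times
  have hmodes := limsup_le_of_modes (N := fun t => L2Norm u t) (fun t => Real.sqrt_nonneg _)
    (y := fun n t => mode u (k n) t)
    (z := fun n t => |v n (t - 1) + (μ + k n ^ 2 * σ) * e n (t - 1)| * |mode u (k n) 1|
      + |e n (t - 1)| * |mode (u_t u) (k n) 1 - k n * σ * d 1|)
    (c := fun n => supD d * (modeGain σ μ (n + 1) / k n))
    (b := fun n => |mode u (k n) 1| + (2 * C / σ + 2 * supD d) / k n)
    (fun t => by
      rw [L2Norm, Real.sq_sqrt (intervalIntegral.integral_nonneg zero_le_one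
        fun _ _ => sq_nonneg _)]
      exact hasSum_sine (cu t))
    (fun n t ht => (K n).solution_bound (d' := deriv d) ht
      (fun s => (hdC.differentiable two_ne_zero s).hasDerivAt)
      (fun s => mode_hasDerivAt hC1 (k n) s)
      (fun s hs => mode_ode hu (hsin n) (by linarith)) (fun s hs => hD s (by linarith)) (hL1 n))
    (fun n => by
      have hs : Tendsto (fun t : ℝ => t - 1) atTop atTop := tendsto_atTop_add_const_right _ _ tendsto_id
      have h1 := (K n).pos_lim.comp hs
      have h2 := (K n).vel_lim.comp hs
      have := ((h2.add (h1.const_mul (μ + k n ^ 2 * σ))).abs.mul_const |mode u (k n) 1|).add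
        (h1.abs.mul_const |mode (u_t u) (k n) 1 - k n * σ * d 1|)
      simpa using this)
    (fun n t ht => by
      have ht' : 0 ≤ t - 1 := by linarith
      rw [abs_of_nonneg (by positivity)]
      refine add_le_add (mul_le_of_le_one_left (abs_nonneg _) ((K n).mom_abs_le (hpos n) ht')) ?_
      have h1 := (K n).pos_abs_le (hpos n) ht'
      have hkn := hk0 n
      have h2 : |e n (t - 1)| ≤ 2 / (k n ^ 2 * σ) := by
        rw [le_div_iff₀ (by positivity)]
        nlinarith [mul_nonneg hμ (abs_nonneg (e n (t - 1)))]
      have h3 : |mode (u_t u) (k n) 1 - k n * σ * d 1| ≤ C + k n * σ * supD d := by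
        refine (abs_sub _ _).trans (add_le_add (hvel n) ?_)
        rw [abs_mul, abs_of_pos (by positivity : 0 < k n * σ)]
        exact mul_le_mul_of_nonneg_left (hD 1 zero_le_one) (by positivity)
      calc _ ≤ 2 / (k n ^ 2 * σ) * (C + k n * σ * supD d) := by gcongr
        _ = (2 * C / σ * (1 / k n) + 2 * supD d) / k n := by field_simp
        _ ≤ (2 * C / σ * 1 + 2 * supD d) / k n := by
            have : 1 / k n ≤ 1 := by rw [div_le_one hkn]; exact hk1 n
            gcongr
        _ = _ := by rw [mul_one])
    (by
      have h1 : Summable fun n => mode u (k n) 1 ^ 2 :=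
        (summable_mul_left_iff two_ne_zero).1 (hasSum_sine (cu 1)).summable
      have h2 := ((h1.add (hinv.mul_left ((2 * C / σ + 2 * supD d) ^ 2))).mul_left 2)
      refine h2.of_nonneg_of_le (fun n => sq_nonneg _) fun n => ?_
      rw [← sq_abs (mode u (k n) 1), mul_one_div, ← div_pow]
      nlinarith [sq_nonneg (|mode u (k n) 1| - (2 * C / σ + 2 * supD d) / k n)])
    (by
      refine ((summable_modeGain hσ hμ).mul_left (supD d ^ 2 / π ^ 2)).congr fun n => ?_
      simp only [hkdef]; push_cast; field_simp)
  refine hmodes.trans (le_of_eq ?_)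
  have hsum : ∑' n, (supD d * (modeGain σ μ (n + 1) / k n)) ^ 2 =
      (supD d / π) ^ 2 * ∑' n : ℕ, modeGain σ μ (n + 1) ^ 2 / ((n : ℝ) + 1) ^ 2 := by
    rw [← tsum_mul_left]
    refine tsum_congr fun n => ?_
    simp only [hkdef]; push_cast; field_simp
  rw [hsum, Gconst_eq, mul_left_comm, Real.sqrt_mul (sq_nonneg _),
    Real.sqrt_sq (div_nonneg hD0 pi_pos.le)]
  ring
end
end

section
/- Let σ > 0 and μ ≥ 0 be constants. For each ω > 0 define r := ω√((μσ−1)²ω² + (μ+σω²)²)/(1+σ²ω²), let θ ∈ (0,π) be the unique angle with cos(θ) = (μσ−1)ω²/((1+σ²ω²)r) and sin(θ) = (μ+σω²)ω/((1+σ²ω²)r), set a := √r·cos(θ/2), b := √r·sin(θ/2), and define Q(ω) := √(p + √M), where p := (b·sinh(2a) − a·sin(2b))/(4ab(cosh(2a) − cos(2b))) and M := (4(a²+b²) − 4(b·sin(2b)·cosh(2a) + a·sinh(2a)·cos(2b)) + sinh²(2a) + sin²(2b)) / (16(a²+b²)(cosh(2a) − cos(2b))²). Suppose γ ≥ 0 is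 a constant such that for every bounded d ∈ C²([0,∞);ℝ) and every classical solution u of the damped wave system with boundary input d one has limsup_{t→+∞} ( (∫₀¹ u(t,x)² dx)^{1/2} ) ≤ γ · sup_{t≥0} |d(t)|. Then γ ≥ sup_{ω>0} Q(ω). -/
/-!
The boundary input `d(t) = cos(ωt)` has `sup |d| = 1` and produces the time-periodic solution
`u(t,x) = Re (exp(iωt) φ(x))`, `φ(x) = sinh(L(1-x)) / sinh L`, where the wave number `L = a + ib`
satisfies the dispersion relation `(1 + iσω) L² = -ω² + iμω` (`dispersion`,
`wave_isClassicalSolution`). From `(Re z)² = (|z|² + Re z²) / 2`,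

  `∫₀¹ u(t,x)² dx = ½ ∫₀¹ |φ|² + ½ Re (exp(2iωt) ∫₀¹ φ²)`  (`integral_wave_sq`),

so the limit superior of the `L²` norm is at least `√(½ ∫₀¹ |φ|² + ½ |∫₀¹ φ²|)`
(`le_limsup_wave`). Both integrals are elementary: the first half-integral is `p` and the second
has modulus `√M` (`integral_normSq_profile`, `norm_integral_profile_sq`). Hence `Q(ω) ≤ γ` for
every `ω > 0`.
-/

open Real Filter MeasureTheory intervalIntegral Set

noncomputable section

/-- `r := ω√((μσ−1)²ω² + (μ+σω²)²)/(1+σ²ω²)`. -/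
def rfreq (σ μ ω : ℝ) : ℝ :=
  ω * Real.sqrt ((μ * σ - 1) ^ 2 * ω ^ 2 + (μ + σ * ω ^ 2) ^ 2) / (1 + σ ^ 2 * ω ^ 2)

/-- The unique angle `θ ∈ (0,π)` with `cos(θ) = (μσ−1)ω²/((1+σ²ω²)r)` and
`sin(θ) = (μ+σω²)ω/((1+σ²ω²)r)`; since the sine is positive it is given by `arccos`. -/
def θfreq (σ μ ω : ℝ) : ℝ :=
  Real.arccos ((μ * σ - 1) * ω ^ 2 / ((1 + σ ^ 2 * ω ^ 2) * rfreq σ μ ω))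

/-- `a := √r·cos(θ/2)`. -/
def afreq (σ μ ω : ℝ) : ℝ := Real.sqrt (rfreq σ μ ω) * Real.cos (θfreq σ μ ω / 2)

/-- `b := √r·sin(θ/2)`. -/
def bfreq (σ μ ω : ℝ) : ℝ := Real.sqrt (rfreq σ μ ω) * Real.sin (θfreq σ μ ω / 2)

/-- `p := (b·sinh(2a) − a·sin(2b))/(4ab(cosh(2a) − cos(2b)))`. -/
def pFreq (σ μ ω : ℝ) : ℝ :=
  (bfreq σ μ ω * Real.sinh (2 * afreq σ μ ω) - afreq σ μ ω * Real.sin (2 * bfreq σ μ ω)) /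
    (4 * afreq σ μ ω * bfreq σ μ ω *
      (Real.cosh (2 * afreq σ μ ω) - Real.cos (2 * bfreq σ μ ω)))

/-- `M := (4(a²+b²) − 4(b sin(2b)cosh(2a) + a sinh(2a)cos(2b)) + sinh²(2a) + sin²(2b))
 / (16(a²+b²)(cosh(2a) − cos(2b))²)`. -/
def MFreq (σ μ ω : ℝ) : ℝ :=
  (4 * (afreq σ μ ω ^ 2 + bfreq σ μ ω ^ 2) -
      4 * (bfreq σ μ ω * Real.sin (2 * bfreq σ μ ω) * Real.cosh (2 * afreq σ μ ω) +
        afreq σ μ ω * Real.sinh (2 * afreq σ μ ω) * Real.cos (2 * bfreq σ μ ω)) +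
      Real.sinh (2 * afreq σ μ ω) ^ 2 + Real.sin (2 * bfreq σ μ ω) ^ 2) /
    (16 * (afreq σ μ ω ^ 2 + bfreq σ μ ω ^ 2) *
      (Real.cosh (2 * afreq σ μ ω) - Real.cos (2 * bfreq σ μ ω)) ^ 2)

/-- `Q(ω) := √(p + √M)`. -/
def Qfreq (σ μ ω : ℝ) : ℝ := Real.sqrt (pFreq σ μ ω + Real.sqrt (MFreq σ μ ω))

/-! ### The periodic solution -/

/-- The spatial profile `φ(x) = sinh(L(1-x)) / sinh L` of a time-periodic solution: it solves
`φ'' = L² φ` with `φ(0) = 1` and `φ(1) = 0`. -/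
def profile (L : ℂ) (x : ℝ) : ℂ := Complex.sinh (L * (1 - (x : ℂ))) / Complex.sinh L

/-- The time-periodic displacement `u(t,x) = Re (exp(iωt) φ(x))`. -/
def wave (ω : ℝ) (L : ℂ) (t x : ℝ) : ℝ :=
  (Complex.exp (Complex.I * ω * t) * profile L x).re

lemma hasDerivAt_re_of {f : ℝ → ℂ} {f' : ℂ} {x : ℝ} (h : HasDerivAt f f' x) :
    HasDerivAt (fun y => (f y).re) f'.re x :=
  Complex.reCLM.hasFDerivAt.comp_hasDerivAt x h

lemma hasDerivAt_time (ω : ℝ) (c : ℂ) (t : ℝ) :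
    HasDerivAt (fun s : ℝ => Complex.exp (Complex.I * ω * s) * c)
      (Complex.exp (Complex.I * ω * t) * (Complex.I * ω * c)) t := by
  have h1 : HasDerivAt (fun s : ℝ => Complex.I * ω * (s : ℂ)) (Complex.I * ω * 1) t :=
    (Complex.ofRealCLM.hasDerivAt (x := t)).const_mul _
  exact ((h1.cexp).mul_const c).congr_deriv (by ring)

lemma hasDerivAt_sub (L : ℂ) (x : ℝ) :
    HasDerivAt (fun y : ℝ => L * (1 - (y : ℂ))) (-L) x := by
  have h1 : HasDerivAt (fun y : ℝ => L * (1 - (y : ℂ))) (L * (0 - 1)) x :=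
    ((hasDerivAt_const x (1 : ℂ)).sub (Complex.ofRealCLM.hasDerivAt (x := x))).const_mul L
  exact h1.congr_deriv (by ring)

lemma hasDerivAt_sinh_sub (L : ℂ) (x : ℝ) :
    HasDerivAt (fun y : ℝ => Complex.sinh (L * (1 - (y : ℂ))))
      (Complex.cosh (L * (1 - (x : ℂ))) * -L) x :=
  (Complex.hasDerivAt_sinh _).comp x (hasDerivAt_sub L x)

lemma hasDerivAt_cosh_sub (L : ℂ) (x : ℝ) :
    HasDerivAt (fun y : ℝ => Complex.cosh (L * (1 - (y : ℂ))))
      (Complex.sinh (L * (1 - (x : ℂ))) * -L) x :=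
  (Complex.hasDerivAt_cosh _).comp x (hasDerivAt_sub L x)

lemma deriv_deriv_profile (L c : ℂ) (x : ℝ) :
    deriv (deriv (fun y : ℝ => (c * profile L y).re)) x = (c * (L ^ 2 * profile L x)).re := by
  have h1 : deriv (fun y : ℝ => (c * profile L y).re) = fun y : ℝ =>
      (c * (Complex.cosh (L * (1 - (y : ℂ))) * -L / Complex.sinh L)).re := by
    funext y
    exact (hasDerivAt_re_of (((hasDerivAt_sinh_sub L y).div_const _).const_mul c)).deriv
  rw [h1]
  have h2 := hasDerivAt_re_of
    ((((hasDerivAt_cosh_sub L x).mul_const (-L)).div_const (Complex.sinh L)).const_mul c)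
  rw [h2.deriv]
  congr 1
  unfold profile
  ring

lemma u_t_wave (ω : ℝ) (L : ℂ) (t x : ℝ) :
    u_t (wave ω L) t x
      = (Complex.exp (Complex.I * ω * t) * (Complex.I * ω * profile L x)).re :=
  (hasDerivAt_re_of (hasDerivAt_time ω (profile L x) t)).deriv

lemma u_tt_wave (ω : ℝ) (L : ℂ) (t x : ℝ) :
    u_tt (wave ω L) t x
      = (Complex.exp (Complex.I * ω * t) *
          (Complex.I * ω * (Complex.I * ω * profile L x))).re := by
  have h : deriv (fun τ => wave ω L τ x) = fun t : ℝ =>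
      (Complex.exp (Complex.I * ω * t) * (Complex.I * ω * profile L x)).re := by
    funext s
    exact u_t_wave ω L s x
  unfold u_tt
  rw [h]
  exact (hasDerivAt_re_of (hasDerivAt_time ω _ t)).deriv

lemma u_xx_wave (ω : ℝ) (L : ℂ) (t x : ℝ) :
    u_xx (wave ω L) t x
      = (Complex.exp (Complex.I * ω * t) * (L ^ 2 * profile L x)).re :=
  deriv_deriv_profile L _ x

lemma u_t_wave_fun (ω : ℝ) (L : ℂ) (t : ℝ) :
    (fun x => u_t (wave ω L) t x) = fun x =>
      ((Complex.exp (Complex.I * ω * t) * (Complex.I * ω)) * profile L x).re := by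
  funext x
  rw [u_t_wave]
  ring_nf

lemma u_txx_wave (ω : ℝ) (L : ℂ) (t x : ℝ) :
    u_txx (wave ω L) t x
      = ((Complex.exp (Complex.I * ω * t) * (Complex.I * ω)) * (L ^ 2 * profile L x)).re := by
  unfold u_txx
  rw [u_t_wave_fun]
  exact deriv_deriv_profile L _ x

lemma contDiff_profile (L : ℂ) : ContDiff ℝ 2 (profile L) := by
  have h : ContDiff ℝ 2 (fun x : ℝ => Complex.sinh (L * (1 - (x : ℂ)))) :=
    (Complex.contDiff_sinh.restrict_scalars ℝ).comp
      (contDiff_const.mul (contDiff_const.sub Complex.ofRealCLM.contDiff))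
  exact h.div_const _

lemma contDiff_wave (ω : ℝ) (L : ℂ) : ContDiff ℝ 2 (Function.uncurry (wave ω L)) := by
  have h1 : ContDiff ℝ 2 (fun q : ℝ × ℝ => Complex.exp (Complex.I * ω * (q.1 : ℂ))) :=
    (contDiff_const.mul (Complex.ofRealCLM.contDiff.comp contDiff_fst)).cexp
  have h2 : ContDiff ℝ 2 (fun q : ℝ × ℝ => profile L q.2) :=
    (contDiff_profile L).comp contDiff_snd
  exact Complex.reCLM.contDiff.comp (h1.mul h2)

/-- The dispersion relation `(1 + iσω) L² = -ω² + iμω` is what the equation demands of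
`exp(iωt) φ(x)`. -/
lemma wave_isClassicalSolution {σ μ ω : ℝ} {L : ℂ} (hL : Complex.sinh L ≠ 0)
    (hdisp : (1 + Complex.I * σ * ω) * L ^ 2 = -(ω : ℂ) ^ 2 + Complex.I * μ * ω) :
    IsClassicalSolution σ μ (fun t => Real.cos (ω * t)) (wave ω L) := by
  refine ⟨contDiff_wave ω L, ?_, ?_, ?_⟩
  · intro t _
    rw [u_t_wave_fun]
    exact Complex.reCLM.contDiff.comp (contDiff_const.mul (contDiff_profile L))
  · intro t x _ _
    rw [u_tt_wave, u_xx_wave, u_txx_wave, u_t_wave, ← Complex.re_ofReal_mul,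
      ← Complex.re_ofReal_mul, ← Complex.add_re, ← Complex.sub_re]
    congr 1
    linear_combination (-(Complex.exp (Complex.I * ω * t) * profile L x)) * hdisp +
      (ω : ℂ) ^ 2 * Complex.exp (Complex.I * ω * t) * profile L x * Complex.I_sq
  · intro t _
    constructor
    · have h : profile L 0 = 1 := by simp [profile, hL]
      have h' : Complex.I * ω * t = ((ω * t : ℝ) : ℂ) * Complex.I := by push_cast; ring
      simp only [wave]
      rw [h, mul_one, h', Complex.exp_ofReal_mul_I_re]
    · simp [wave, profile]

/-! ### The spatial `L²` norm -/

lemma normSq_sinh (x y : ℝ) :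
    Complex.normSq (Complex.sinh (x + y * Complex.I))
      = (Real.cosh (2 * x) - Real.cos (2 * y)) / 2 := by
  have h : Complex.sinh (x + y * Complex.I)
      = ((Real.sinh x * Real.cos y : ℝ) : ℂ)
        + ((Real.cosh x * Real.sin y : ℝ) : ℂ) * Complex.I := by
    rw [Complex.sinh_add, Complex.cosh_mul_I, Complex.sinh_mul_I]
    push_cast
    ring
  rw [h, Complex.normSq_add_mul_I, Real.cosh_two_mul, Real.cos_two_mul]
  linear_combination (Real.cos y ^ 2 - 1 / 2) * Real.cosh_sq x * (-1) +
    (Real.cosh x ^ 2) * Real.sin_sq_add_cos_sq y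

lemma cosh_sub_cos_pos {a : ℝ} (b : ℝ) (ha : 0 < a) :
    0 < Real.cosh (2 * a) - Real.cos (2 * b) := by
  have h1 : 1 < Real.cosh (2 * a) := Real.one_lt_cosh.mpr (by positivity)
  linarith [Real.cos_le_one (2 * b)]

lemma sinh_ne_zero {a : ℝ} (b : ℝ) (ha : 0 < a) :
    Complex.sinh (a + b * Complex.I) ≠ 0 := by
  rw [← Complex.normSq_pos, normSq_sinh]
  linarith [cosh_sub_cos_pos b ha]

lemma integral_normSq_profile {a b : ℝ} (ha : 0 < a) (hb : 0 < b) :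
    ∫ x in (0:ℝ)..1, Complex.normSq (profile (a + b * Complex.I) x)
      = 2 * ((b * Real.sinh (2 * a) - a * Real.sin (2 * b)) /
          (4 * a * b * (Real.cosh (2 * a) - Real.cos (2 * b)))) := by
  have hD := (cosh_sub_cos_pos b ha).ne'
  have hf : ∀ x : ℝ, Complex.normSq (profile (a + b * Complex.I) x)
      = (Real.cosh (2 * a * (1 - x)) - Real.cos (2 * b * (1 - x))) /
        (Real.cosh (2 * a) - Real.cos (2 * b)) := by
    intro x
    have h : ((a : ℂ) + b * Complex.I) * (1 - (x : ℂ))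
        = ((a * (1 - x) : ℝ) : ℂ) + ((b * (1 - x) : ℝ) : ℂ) * Complex.I := by
      push_cast; ring
    rw [profile, Complex.normSq_div, h, normSq_sinh, normSq_sinh,
      div_div_div_cancel_right₀ two_ne_zero, mul_assoc, mul_assoc]
  simp_rw [hf]
  have hlin : ∀ c x : ℝ, HasDerivAt (fun y : ℝ => c * (1 - y)) (-c) x := by
    intro c x
    have h := ((hasDerivAt_const x (1:ℝ)).sub (hasDerivAt_id x)).const_mul c
    exact h.congr_deriv (by ring)
  have hF : ∀ x ∈ Set.uIcc (0:ℝ) 1, HasDerivAt (fun y : ℝ =>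
      -(Real.sinh (2 * a * (1 - y)) / (2 * a) - Real.sin (2 * b * (1 - y)) / (2 * b)) /
        (Real.cosh (2 * a) - Real.cos (2 * b)))
      ((Real.cosh (2 * a * (1 - x)) - Real.cos (2 * b * (1 - x))) /
        (Real.cosh (2 * a) - Real.cos (2 * b))) x := by
    intro x _
    have h := ((((hlin (2 * a) x).sinh.div_const (2 * a)).sub
      ((hlin (2 * b) x).sin.div_const (2 * b))).neg).div_const
        (Real.cosh (2 * a) - Real.cos (2 * b))
    refine h.congr_deriv ?_
    field_simp
    ring
  rw [intervalIntegral.integral_eq_sub_of_hasDerivAt hF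
    (Continuous.intervalIntegrable (by fun_prop) _ _)]
  simp only [sub_self, mul_zero, Real.sinh_zero, Real.sin_zero, sub_zero, mul_one]
  field_simp
  ring

lemma integral_profile_sq {L : ℂ} (hL : Complex.sinh L ≠ 0) (hL0 : L ≠ 0) :
    ∫ x in (0:ℝ)..1, profile L x ^ 2
      = (Complex.sinh (2 * L) - 2 * L) / (4 * L * Complex.sinh L ^ 2) := by
  have hF : ∀ x ∈ Set.uIcc (0:ℝ) 1, HasDerivAt (fun y : ℝ =>
      (-(Complex.sinh (2 * L * (1 - (y : ℂ))) / (2 * L)) + 1 * (1 - (y : ℂ))) /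
        (2 * Complex.sinh L ^ 2)) (profile L x ^ 2) x := by
    intro x _
    have h := ((((hasDerivAt_sinh_sub (2 * L) x).div_const (2 * L)).neg).add
      (hasDerivAt_sub 1 x)).div_const (2 * Complex.sinh L ^ 2)
    refine h.congr_deriv ?_
    have e : 2 * L * (1 - (x : ℂ)) = 2 * (L * (1 - (x : ℂ))) := by ring
    rw [e, Complex.cosh_two_mul, Complex.cosh_sq, profile]
    field_simp
    ring
  rw [intervalIntegral.integral_eq_sub_of_hasDerivAt hF
    (((contDiff_profile L).continuous.pow 2).intervalIntegrable _ _)]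
  simp only [Complex.ofReal_one, sub_self, mul_zero, Complex.sinh_zero, Complex.ofReal_zero,
    sub_zero, mul_one]
  field_simp
  ring

lemma norm_integral_profile_sq {a b : ℝ} (ha : 0 < a) :
    ‖∫ x in (0:ℝ)..1, profile (a + b * Complex.I) x ^ 2‖
      = 2 * Real.sqrt ((4 * (a ^ 2 + b ^ 2) - 4 * (b * Real.sin (2 * b) * Real.cosh (2 * a) +
        a * Real.sinh (2 * a) * Real.cos (2 * b)) + Real.sinh (2 * a) ^ 2
        + Real.sin (2 * b) ^ 2) /
        (16 * (a ^ 2 + b ^ 2) * (Real.cosh (2 * a) - Real.cos (2 * b)) ^ 2)) := by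
  have hD := (cosh_sub_cos_pos b ha).ne'
  have hS := sinh_ne_zero b ha
  have hL0 : (a : ℂ) + b * Complex.I ≠ 0 := by
    intro h
    rw [h] at hS
    simp at hS
  have hab : a ^ 2 + b ^ 2 ≠ 0 := by positivity
  have hnum : Complex.normSq (Complex.sinh (2 * ((a : ℂ) + b * Complex.I))
        - 2 * ((a : ℂ) + b * Complex.I))
      = 4 * (a ^ 2 + b ^ 2) - 4 * (b * Real.sin (2 * b) * Real.cosh (2 * a) +
        a * Real.sinh (2 * a) * Real.cos (2 * b)) + Real.sinh (2 * a) ^ 2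
        + Real.sin (2 * b) ^ 2 := by
    have h : Complex.sinh (2 * ((a : ℂ) + b * Complex.I)) - 2 * ((a : ℂ) + b * Complex.I)
        = ((Real.sinh (2 * a) * Real.cos (2 * b) - 2 * a : ℝ) : ℂ)
          + ((Real.cosh (2 * a) * Real.sin (2 * b) - 2 * b : ℝ) : ℂ) * Complex.I := by
      rw [mul_add, ← mul_assoc, Complex.sinh_add, Complex.cosh_mul_I, Complex.sinh_mul_I]
      push_cast
      ring
    rw [h, Complex.normSq_add_mul_I]
    linear_combination (Real.sin (2 * b) ^ 2) * Real.cosh_sq (2 * a) +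
      (Real.sinh (2 * a) ^ 2) * Real.sin_sq_add_cos_sq (2 * b)
  have hden : Complex.normSq (4 * ((a : ℂ) + b * Complex.I)
        * Complex.sinh ((a : ℂ) + b * Complex.I) ^ 2)
      = 4 * (a ^ 2 + b ^ 2) * (Real.cosh (2 * a) - Real.cos (2 * b)) ^ 2 := by
    rw [map_mul, map_mul, map_pow, normSq_sinh, Complex.normSq_add_mul_I]
    norm_num [Complex.normSq_apply]
    ring
  rw [integral_profile_sq hS hL0]
  refine (sq_eq_sq₀ (norm_nonneg _) (by positivity)).mp ?_
  rw [← Complex.normSq_eq_norm_sq, Complex.normSq_div, hden, mul_pow, ← hnum, Real.sq_sqrt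
    (div_nonneg (Complex.normSq_nonneg _) (by positivity))]
  field_simp
  ring

lemma integral_wave_sq (ω : ℝ) (L : ℂ) (t : ℝ) :
    ∫ x in (0:ℝ)..1, wave ω L t x ^ 2
      = (∫ x in (0:ℝ)..1, Complex.normSq (profile L x)) / 2
        + (Complex.exp (Complex.I * (2 * ω * t : ℝ)) *
            ∫ x in (0:ℝ)..1, profile L x ^ 2).re / 2 := by
  have hc := (contDiff_profile L).continuous
  have hpt : ∀ x : ℝ, wave ω L t x ^ 2 = Complex.normSq (profile L x) / 2
      + (Complex.exp (Complex.I * (2 * ω * t : ℝ)) * profile L x ^ 2).re / 2 := by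
    intro x
    have h1 : ∀ z : ℂ, z.re ^ 2 = Complex.normSq z / 2 + (z ^ 2).re / 2 := by
      intro z
      simp only [Complex.normSq_apply, sq, Complex.mul_re]
      ring
    rw [wave, h1, mul_pow, Complex.normSq_mul, ← Complex.exp_nat_mul]
    have h2 : Complex.normSq (Complex.exp (Complex.I * ω * t)) = 1 := by
      have : Complex.I * ω * t = ((ω * t : ℝ) : ℂ) * Complex.I := by push_cast; ring
      rw [Complex.normSq_eq_norm_sq, this, Complex.norm_exp_ofReal_mul_I]
      norm_num
    rw [h2, one_mul]
    congr 5
    push_cast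
    ring
  simp_rw [hpt]
  rw [intervalIntegral.integral_add, intervalIntegral.integral_div,
    intervalIntegral.integral_div, ← intervalIntegral.integral_const_mul]
  · congr 2
    exact Complex.reCLM.intervalIntegral_comp_comm
      ((continuous_const.mul (hc.pow 2)).intervalIntegrable _ _)
  · exact Continuous.intervalIntegrable ((Complex.continuous_normSq.comp hc).div_const 2) _ _
  · exact Continuous.intervalIntegrable
      ((Complex.continuous_re.comp (continuous_const.mul (hc.pow 2))).div_const 2) _ _

/-- The `L²` norm of the periodic solution oscillates in time; its maximum, attained once the
phase of `exp(2iωt)` cancels that of `∫ φ²`, recurs with the period `2π/ω`. -/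
lemma le_limsup_wave {ω : ℝ} (hω : 0 < ω) (L : ℂ) :
    Real.sqrt ((∫ x in (0:ℝ)..1, Complex.normSq (profile L x)) / 2
        + ‖∫ x in (0:ℝ)..1, profile L x ^ 2‖ / 2)
      ≤ Filter.limsup (fun t => L2Norm (wave ω L) t) Filter.atTop := by
  set C := ∫ x in (0:ℝ)..1, profile L x ^ 2 with hC
  apply Filter.le_limsup_of_frequently_le
  · rw [Filter.frequently_atTop]
    intro T
    obtain ⟨n, hn⟩ := exists_nat_ge ((T + C.arg / (2 * ω)) / (2 * π / ω))
    refine ⟨n * (2 * π / ω) - C.arg / (2 * ω), ?_, ?_⟩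
    · rw [div_le_iff₀ (by positivity)] at hn
      linarith
    · unfold L2Norm
      apply Real.sqrt_le_sqrt
      rw [integral_wave_sq, ← hC]
      have e : (Complex.I * ((2 * ω * (n * (2 * π / ω) - C.arg / (2 * ω)) : ℝ) : ℂ))
          = ((2 * n : ℕ) : ℂ) * (2 * π * Complex.I) + -(C.arg * Complex.I) := by
        have hω' : (ω : ℂ) ≠ 0 := by exact_mod_cast hω.ne'
        push_cast
        field_simp
        ring
      have e2 : Complex.exp (Complex.I *
          ((2 * ω * (n * (2 * π / ω) - C.arg / (2 * ω)) : ℝ) : ℂ)) * C = ‖C‖ := by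
        rw [e, Complex.exp_add, Complex.exp_nat_mul_two_pi_mul_I, one_mul]
        have h := Complex.norm_mul_exp_arg_mul_I C
        have h' : Complex.exp (-(C.arg * Complex.I)) * Complex.exp (C.arg * Complex.I) = 1 := by
          rw [← Complex.exp_add, neg_add_cancel, Complex.exp_zero]
        linear_combination (-Complex.exp (-(C.arg * Complex.I))) * h + (‖C‖ : ℂ) * h'
      rw [e2, Complex.ofReal_re]
  · refine Filter.isBoundedUnder_of ⟨Real.sqrt
      ((∫ x in (0:ℝ)..1, Complex.normSq (profile L x)) / 2 + ‖C‖ / 2), fun t => ?_⟩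
    unfold L2Norm
    apply Real.sqrt_le_sqrt
    rw [integral_wave_sq, ← hC]
    have h := Complex.re_le_norm (Complex.exp (Complex.I * (2 * ω * t : ℝ)) * C)
    rw [norm_mul, mul_comm Complex.I, Complex.norm_exp_ofReal_mul_I, one_mul] at h
    rw [mul_comm Complex.I]
    linarith

/-! ### The wave number -/

/-- The pair `(a, b)` lies in the open first quadrant, and `(a + ib)²` has the real and imaginary
parts of `(-ω² + iμω) / (1 + iσω)`. -/
lemma freq_spec {σ μ ω : ℝ} (hσ : 0 < σ) (hμ : 0 ≤ μ) (hω : 0 < ω) :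
    0 < afreq σ μ ω ∧ 0 < bfreq σ μ ω ∧
    afreq σ μ ω ^ 2 - bfreq σ μ ω ^ 2 = (μ * σ - 1) * ω ^ 2 / (1 + σ ^ 2 * ω ^ 2) ∧
    2 * afreq σ μ ω * bfreq σ μ ω = (μ + σ * ω ^ 2) * ω / (1 + σ ^ 2 * ω ^ 2) := by
  have hK : 0 < 1 + σ ^ 2 * ω ^ 2 := by positivity
  have hY : 0 < (μ + σ * ω ^ 2) * ω := by positivity
  have hr : 0 < rfreq σ μ ω := by unfold rfreq; positivity
  have hr2 : ((1 + σ ^ 2 * ω ^ 2) * rfreq σ μ ω) ^ 2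
      = ((μ * σ - 1) * ω ^ 2) ^ 2 + ((μ + σ * ω ^ 2) * ω) ^ 2 := by
    unfold rfreq
    rw [mul_div_cancel₀ _ hK.ne', mul_pow, Real.sq_sqrt (by positivity)]
    ring
  have hθ : θfreq σ μ ω
      = Real.arccos ((μ * σ - 1) * ω ^ 2 / ((1 + σ ^ 2 * ω ^ 2) * rfreq σ μ ω)) := rfl
  have hR : 0 < (1 + σ ^ 2 * ω ^ 2) * rfreq σ μ ω := by positivity
  set X := (μ * σ - 1) * ω ^ 2
  set Y := (μ + σ * ω ^ 2) * ω
  set K := 1 + σ ^ 2 * ω ^ 2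
  set r := rfreq σ μ ω
  have habs := abs_lt_of_sq_lt_sq' (show X ^ 2 < (K * r) ^ 2 by nlinarith) hR.le
  have h1 : -1 < X / (K * r) := by rw [lt_div_iff₀ hR]; linarith
  have h2 : X / (K * r) < 1 := by rw [div_lt_one hR]; linarith
  have hθ0 : 0 < θfreq σ μ ω := by rw [hθ]; exact Real.arccos_pos.mpr h2
  have hθπ : θfreq σ μ ω < π := by rw [hθ]; exact Real.arccos_lt_pi.mpr h1
  have hcos : Real.cos (θfreq σ μ ω) = X / (K * r) := by
    rw [hθ, Real.cos_arccos h1.le h2.le]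
  have hsin : Real.sin (θfreq σ μ ω) = Y / (K * r) := by
    rw [hθ, Real.sin_arccos, Real.sqrt_eq_iff_mul_self_eq_of_pos (by positivity)]
    field_simp
    linarith
  have hcd := Real.cos_two_mul (θfreq σ μ ω / 2)
  have hsd := Real.sin_two_mul (θfreq σ μ ω / 2)
  have hsc := Real.sin_sq_add_cos_sq (θfreq σ μ ω / 2)
  rw [mul_div_cancel₀ _ two_ne_zero] at hcd hsd
  have hsq : Real.sqrt r ^ 2 = r := Real.sq_sqrt hr.le
  refine ⟨mul_pos (Real.sqrt_pos.mpr hr) (Real.cos_pos_of_mem_Ioo ⟨by linarith, by linarith⟩),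
    mul_pos (Real.sqrt_pos.mpr hr) (Real.sin_pos_of_pos_of_lt_pi (by linarith) (by linarith)),
    ?_, ?_⟩
  · have : afreq σ μ ω ^ 2 - bfreq σ μ ω ^ 2 = r * Real.cos (θfreq σ μ ω) := by
      unfold afreq bfreq
      rw [mul_pow, mul_pow, hsq, hcd]
      linear_combination (-r) * hsc
    rw [this, hcos]
    field_simp
  · have : 2 * afreq σ μ ω * bfreq σ μ ω = r * Real.sin (θfreq σ μ ω) := by
      unfold afreq bfreq
      rw [hsd]
      linear_combination (2 * Real.sin (θfreq σ μ ω / 2) * Real.cos (θfreq σ μ ω / 2)) * hsq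
    rw [this, hsin]
    field_simp

lemma dispersion {σ μ ω : ℝ} (hσ : 0 < σ) (hμ : 0 ≤ μ) (hω : 0 < ω) :
    (1 + Complex.I * σ * ω) * ((afreq σ μ ω : ℂ) + bfreq σ μ ω * Complex.I) ^ 2
      = -(ω : ℂ) ^ 2 + Complex.I * μ * ω := by
  obtain ⟨-, -, h1, h2⟩ := freq_spec hσ hμ hω
  have hK : 1 + σ ^ 2 * ω ^ 2 ≠ 0 := by positivity
  generalize afreq σ μ ω = a at *
  generalize bfreq σ μ ω = b at *
  rw [eq_div_iff hK] at h1 h2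
  have e1 : (a ^ 2 - b ^ 2) - σ * ω * (2 * a * b) = -ω ^ 2 := by
    apply mul_right_cancel₀ hK
    linear_combination h1 - σ * ω * h2
  have e2 : σ * ω * (a ^ 2 - b ^ 2) + 2 * a * b = μ * ω := by
    apply mul_right_cancel₀ hK
    linear_combination σ * ω * h1 + h2
  apply Complex.ext
  · simp [sq] at e1 ⊢
    linarith
  · simp [sq] at e2 ⊢
    linarith

lemma supD_cos_le (ω : ℝ) : supD (fun t => Real.cos (ω * t)) ≤ 1 := by
  refine Real.sSup_le ?_ zero_le_one
  rintro y ⟨t, -, rfl⟩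
  exact Real.abs_cos_le_one _

/-- any asymptotic-gain constant `γ` for the spatial L² norm satisfies
`γ ≥ sup_{ω>0} Q(ω)`. -/
theorem asymptotic_gain_L2_lower_bound
    (σ μ : ℝ) (hσ : 0 < σ) (hμ : 0 ≤ μ)
    (γ : ℝ) (hγ : 0 ≤ γ)
    (hgain : ∀ (d : ℝ → ℝ) (u : ℝ → ℝ → ℝ), BddC2 d → IsClassicalSolution σ μ d u →
      Filter.limsup (fun t => L2Norm u t) Filter.atTop ≤ γ * supD d) :
    γ ≥ sSup {y : ℝ | ∃ ω : ℝ, 0 < ω ∧ y = Qfreq σ μ ω} := by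
  refine Real.sSup_le ?_ hγ
  rintro y ⟨ω, hω, rfl⟩
  obtain ⟨ha, hb, -, -⟩ := freq_spec hσ hμ hω
  have hd : BddC2 (fun t => Real.cos (ω * t)) :=
    ⟨Real.contDiff_cos.comp (contDiff_const.mul contDiff_id),
      1, fun t _ => Real.abs_cos_le_one _⟩
  have h1 := hgain _ _ hd
    (wave_isClassicalSolution (sinh_ne_zero (bfreq σ μ ω) ha) (dispersion hσ hμ hω))
  have h2 := le_limsup_wave hω ((afreq σ μ ω : ℂ) + bfreq σ μ ω * Complex.I)
  rw [integral_normSq_profile ha hb, norm_integral_profile_sq ha,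
    mul_div_cancel_left₀ _ two_ne_zero, mul_div_cancel_left₀ _ two_ne_zero] at h2
  calc Qfreq σ μ ω ≤ _ := h2
    _ ≤ _ := h1
    _ ≤ γ * 1 := mul_le_mul_of_nonneg_left (supD_cos_le ω) hγ
    _ = γ := mul_one γ
end
end
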